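/- arXiv:2006.13059 — 2 statements merged into one kernel-verified Lean document; each statement's English description precedes it below -/
import Mathlib

section
/- Let U ⊆ (Fin n → ℂ) × (Fin n → ℂ) be a nonempty convex open set with variables written (z, φ), and let a_{i j} : U → ℂ (i, j ∈ Fin n) be ℂ-analytic functions satisfying ∂_{φ_k} a_{i j} = ∂_{φ_i} a_{k j} on U for all i, j, k. Then there exist ℂ-analytic functions θ_j : U → ℂ (j ∈ Fin n) with ∂_{φ_i} θ_j = a_{i j} on U for all i, j. -/
/-!
The statement is the Poincaré lemma for holomorphic forms in the variables `φ`, with the variables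
`z` as holomorphic parameters. The slices `{φ | (z, φ) ∈ U}` vary with `z`, and `U` need not admit a
holomorphic section over its projection to the `z`-space, so that integrating along segments from a
base point is not available. Indeed already the case of one variable `φ` rests on the vanishing of
the first cohomology of the structure sheaf of the projection of `U`, which is again convex. The
proof below treats all coordinates alike and obtains what it needs from explicit integral kernels.

*One direction, near a compact convex set `K`.* A function `f` holomorphic near `K` is represented
on `K` by a Cauchy–Fantappiè integral `c f(x) = ∫ f(ζ) k(ζ, x) dζ` over a compact set of points
`ζ ∉ K` (`exists_kernel`). The kernel `k(ζ, ·)` is a rational function whose poles lie on the complex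
hyperplane `∑ sₗ(ζ) (ζₗ - xₗ) = 0`, which misses `K`. The complement of a hyperplane is simple enough
for explicit integration: `k(ζ, ·)` is integrated in the `i`-th coordinate along the segment from a
point `a(ζ)`, depending continuously on `ζ` and chosen so far out that the segment avoids the
hyperplane for every `x ∈ K`. Integrating over `ζ` gives `θ` with `∂θ/∂xᵢ = f` on the interior of `K`
(`antideriv_compact`).

The integral formula itself is proved in two stages. For entire `f` the integral of `f` against the
determinant of the `∂̄`-Jacobian of a section does not change when the section is modified on a
compact set (Stokes, `integral_dbarDet_congr`), which compares the given section with a smoothed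
Bochner–Martinelli section, whose determinant is a radial density (`dbarDet_loc`); there the mean
value property applies (`integral_radial`). The general case follows by Runge approximation
(`runge`), which rests on a holomorphic map of a disc of radius `> 1` into a thin neighbourhood of
`[0, 1]`: composing `f` with the corresponding contractions gives power series whose partial sums are
entire in `x`.

*One direction, on a convex open set.* The antiderivatives on the members of a compact convex
exhaustion differ by functions of the other coordinates, on convex open sets in one dimension less.
Runge approximation of these differences makes the Mittag-Leffler procedure converge
(`antideriv_open`).

*All directions.* By induction on the set of directions: if `θ` has the right derivatives in the
directions of `J`, closedness shows that the error in a further direction does not depend on the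
coordinates in `J`, so it has an antiderivative which does not depend on them either
(`antideriv_system`).
-/

namespace RelPoincare

open Set Filter Topology MeasureTheory Metric
open scoped ContDiff

/-! ### Limits, parameter integrals and derivatives of holomorphic functions -/

section

variable {E : Type*} [NormedAddCommGroup E] [NormedSpace ℂ E]

theorem hasDerivAt_line {f : E → ℂ} {x v : E} {l : ℂ} (hf : DifferentiableAt ℂ f (x + l • v)) :
    HasDerivAt (fun t : ℂ => f (x + t • v)) (fderiv ℂ f (x + l • v) v) l := by
  have h1 : HasDerivAt (fun t : ℂ => x + t • v) v l := by
    simpa using ((hasDerivAt_id l).smul_const v).const_add x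
  exact hf.hasFDerivAt.comp_hasDerivAt l h1

/-- Cauchy's estimate for the Fréchet derivative in several variables. -/
theorem norm_fderiv_le {f : E → ℂ} {x : E} {r M : ℝ} (hr : 0 < r)
    (hf : ∀ y ∈ closedBall x r, DifferentiableAt ℂ f y)
    (hM : ∀ y ∈ closedBall x r, ‖f y‖ ≤ M) : ‖fderiv ℂ f x‖ ≤ M / r := by
  have hM0 : 0 ≤ M := (norm_nonneg _).trans (hM x (mem_closedBall_self hr.le))
  refine ContinuousLinearMap.opNorm_le_bound _ (by positivity) fun v => ?_
  rcases eq_or_ne v 0 with rfl | hv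
  · simp
  have hv' : 0 < ‖v‖ := norm_pos_iff.2 hv
  have hmem : ∀ t : ℂ, ‖t‖ ≤ r / ‖v‖ → x + t • v ∈ closedBall x r := by
    intro t ht
    rw [mem_closedBall, dist_eq_norm, add_sub_cancel_left, norm_smul]
    exact (le_div_iff₀ hv').1 ht
  have hd : ∀ t ∈ closedBall (0 : ℂ) (r / ‖v‖),
      DifferentiableAt ℂ (fun t : ℂ => f (x + t • v)) t := fun t ht =>
    (hasDerivAt_line (hf _ (hmem t (by simpa using ht)))).differentiableAt
  have h0 : deriv (fun t : ℂ => f (x + t • v)) 0 = fderiv ℂ f x v := by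
    have := (hasDerivAt_line (f := f) (x := x) (v := v) (l := 0)
      (hf _ (hmem 0 (by simp; positivity)))).deriv
    simpa using this
  have := Complex.norm_deriv_le_of_forall_mem_sphere_norm_le (c := 0) (R := r / ‖v‖) (C := M)
    (f := fun t : ℂ => f (x + t • v)) (by positivity)
    (DifferentiableOn.diffContOnCl (fun t ht => (hd t
      (closure_ball_subset_closedBall ht)).differentiableWithinAt))
    (fun t ht => hM _ (hmem t (by simpa using (mem_sphere_iff_norm.1 ht).le)))
  rw [h0] at this
  calc ‖fderiv ℂ f x v‖ ≤ M / (r / ‖v‖) := this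
    _ = M / r * ‖v‖ := by field_simp

/-- Geometrically convergent sequences of holomorphic functions have holomorphic limits, and
directional derivatives which do not depend on the index pass to the limit. -/
theorem exists_limit {V : Set E} (hV : IsOpen V) {f : ℕ → E → ℂ} {n₀ : ℕ} {C : ℝ}
    (hf : ∀ n ≥ n₀, DifferentiableOn ℂ (f n) V)
    (hC : ∀ n ≥ n₀, ∀ x ∈ V, ‖f (n + 1) x - f n x‖ ≤ C * (1 / 2) ^ n) :
    ∃ g : E → ℂ, DifferentiableOn ℂ g V ∧ (∀ x ∈ V, Tendsto (fun n => f n x) atTop (𝓝 (g x))) ∧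
      ∀ x ∈ V, ∀ v b, (∀ n ≥ n₀, fderiv ℂ (f n) x v = b) → fderiv ℂ g x v = b := by
  have hcau : ∀ x ∈ V, ∃ l, Tendsto (fun n => f n x) atTop (𝓝 l) := by
    intro x hx
    have : CauchySeq (fun n => f (n + n₀) x) := by
      refine cauchySeq_of_le_geometric (1 / 2) (C * (1 / 2) ^ n₀) (by norm_num) fun n => ?_
      rw [dist_comm, dist_eq_norm, show n + 1 + n₀ = (n + n₀) + 1 by ring]
      refine (hC (n + n₀) (by omega) x hx).trans (le_of_eq ?_)
      rw [pow_add]; ring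
    obtain ⟨l, hl⟩ := cauchySeq_tendsto_of_complete this
    exact ⟨l, (tendsto_add_atTop_iff_nat (f := fun n => f n x) n₀).1 hl⟩
  choose! g hg using hcau
  have hder : ∀ x ∈ V, ∃ L, HasFDerivAt g L x ∧
      Tendsto (fun n => fderiv ℂ (f n) x) atTop (𝓝 L) := by
    intro x hx
    obtain ⟨r, hr, hrV⟩ := Metric.isOpen_iff.1 hV x hx
    have hsub : ∀ y ∈ ball x (r / 2), closedBall y (r / 4) ⊆ V := fun y hy =>
      (closedBall_subset_closedBall' (ε₂ := r * (3 / 4)) (by rw [mem_ball] at hy; linarith)).trans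
        ((closedBall_subset_ball (by linarith)).trans hrV)
    have hstep : ∀ n ≥ n₀, ∀ y ∈ ball x (r / 2),
        ‖fderiv ℂ (f (n + 1)) y - fderiv ℂ (f n) y‖ ≤ C * (1 / 2) ^ n / (r / 4) := by
      intro n hn y hy
      have hdn : ∀ m ≥ n₀, ∀ z ∈ closedBall y (r / 4), DifferentiableAt ℂ (f m) z :=
        fun m hm z hz => (hf m hm).differentiableAt (hV.mem_nhds (hsub y hy hz))
      have := norm_fderiv_le (f := f (n + 1) - f n) (x := y) (r := r / 4) (by positivity)
        (fun z hz => (hdn (n + 1) (by omega) z hz).sub (hdn n hn z hz))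
        (fun z hz => hC n hn z (hsub y hy hz))
      rwa [fderiv_sub (hdn (n + 1) (by omega) y (mem_closedBall_self (by positivity)))
        (hdn n hn y (mem_closedBall_self (by positivity)))] at this
    have hstep' : ∀ y ∈ ball x (r / 2), ∀ n, dist (fderiv ℂ (f (n + n₀)) y)
        (fderiv ℂ (f (n + 1 + n₀)) y) ≤ C * (1 / 2) ^ n₀ / (r / 4) * (1 / 2) ^ n := by
      intro y hy n
      rw [dist_comm, dist_eq_norm, show n + 1 + n₀ = (n + n₀) + 1 by ring]
      refine (hstep (n + n₀) (by omega) y hy).trans (le_of_eq ?_)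
      rw [pow_add]; ring
    have hlim : ∀ y ∈ ball x (r / 2), ∃ L,
        Tendsto (fun n => fderiv ℂ (f (n + n₀)) y) atTop (𝓝 L) := fun y hy =>
      cauchySeq_tendsto_of_complete (cauchySeq_of_le_geometric (1 / 2) _ (by norm_num)
        (hstep' y hy))
    choose! g' hg' using hlim
    have hx2 : x ∈ ball x (r / 2) := mem_ball_self (by positivity)
    have hsV : ball x (r / 2) ⊆ V := (ball_subset_ball (by linarith)).trans hrV
    refine ⟨g' x, ?_, (tendsto_add_atTop_iff_nat (f := fun n => fderiv ℂ (f n) x) n₀).1 (hg' x hx2)⟩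
    refine hasFDerivAt_of_tendstoUniformlyOn (f := fun n => f (n + n₀))
      (f' := fun n => fderiv ℂ (f (n + n₀))) (l := atTop) isOpen_ball ?_
      (fun n y hy => ((hf _ (by omega)).differentiableAt (hV.mem_nhds (hsV hy))).hasFDerivAt)
      (fun y hy => (tendsto_add_atTop_iff_nat (f := fun n => f n y) n₀).2 (hg y (hsV hy))) hx2
    have h0 : Tendsto (fun n : ℕ => C * (1 / 2) ^ n₀ / (r / 4) * (1 / 2) ^ n / (1 - 1 / 2))
        atTop (𝓝 0) := by
      simpa using ((tendsto_pow_atTop_nhds_zero_of_lt_one (r := (1 / 2 : ℝ)) (by norm_num)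
        (by norm_num)).const_mul (C * (1 / 2) ^ n₀ / (r / 4))).div_const (1 - 1 / 2)
    rw [Metric.tendstoUniformlyOn_iff]
    intro ε hε
    filter_upwards [h0.eventually (gt_mem_nhds hε)] with n hn y hy
    rw [dist_comm]
    exact (dist_le_of_le_geometric_of_tendsto _ _ (by norm_num) (hstep' y hy) (hg' y hy) n).trans_lt
      hn
  refine ⟨g, fun x hx => ?_, hg, fun x hx v b hb => ?_⟩
  · obtain ⟨L, hL, -⟩ := hder x hx
    exact hL.differentiableAt.differentiableWithinAt
  · obtain ⟨L, hL, hL'⟩ := hder x hx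
    rw [hL.fderiv]
    have h1 : Tendsto (fun n => fderiv ℂ (f n) x v) atTop (𝓝 (L v)) :=
      ((ContinuousLinearMap.apply ℂ ℂ v).continuous.tendsto L).comp hL'
    refine tendsto_nhds_unique h1 (tendsto_const_nhds.congr' ?_)
    filter_upwards [eventually_ge_atTop n₀] with n hn using (hb n hn).symm

variable [FiniteDimensional ℂ E]

/-- If `F` is jointly continuous and holomorphic in the second variable, its derivative in the
second variable depends continuously on the first one. -/
theorem continuousOn_fderiv_param {α : Type*} [TopologicalSpace α] {S : Set α} {B : Set E}
    (hB : IsOpen B) {F : α → E → ℂ} (hF : ContinuousOn (fun p : α × E => F p.1 p.2) (S ×ˢ B))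
    (hd : ∀ t ∈ S, DifferentiableOn ℂ (F t) B) {x : E} (hx : x ∈ B) :
    ContinuousOn (fun t => fderiv ℂ (F t) x) S := by
  have : ProperSpace E := FiniteDimensional.proper ℂ E
  obtain ⟨r, hr, hrB⟩ := nhds_basis_closedBall.mem_iff.1 (hB.mem_nhds hx)
  intro t ht
  rw [ContinuousWithinAt, Metric.tendsto_nhds]
  intro ε hε
  -- the tube lemma gives uniform closeness of `F t'` to `F t` on the compact ball
  have key : ∀ᶠ t' in 𝓝[S] t, ∀ y ∈ closedBall x r, dist (F t' y) (F t y) < ε * r / 2 := by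
    have h := (isCompact_closedBall x r).mem_prod_nhdsSet_of_forall (l := 𝓝[S] t)
      (s := {z : α × E | dist (F z.1 z.2) (F t z.2) < ε * r / 2}) ?_
    · exact (Eventually.curry h).mono fun _ h => h.self_of_nhdsSet
    intro y hy
    have e : 𝓝[S ×ˢ B] (t, y) = 𝓝[S] t ×ˢ 𝓝 y := by
      rw [nhdsWithin_prod_eq, hB.nhdsWithin_eq (hrB hy)]
    have c1 : Tendsto (fun z : α × E => F z.1 z.2) (𝓝[S] t ×ˢ 𝓝 y) (𝓝 (F t y)) := by
      rw [← e]; exact hF (t, y) ⟨ht, hrB hy⟩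
    have c2 : Tendsto (fun z : α × E => F t z.2) (𝓝[S] t ×ˢ 𝓝 y) (𝓝 (F t y)) :=
      (((hd t ht).differentiableAt (hB.mem_nhds (hrB hy))).continuousAt.tendsto).comp tendsto_snd
    have := c1.dist c2
    rw [dist_self] at this
    exact this.eventually (gt_mem_nhds (by positivity))
  filter_upwards [key, self_mem_nhdsWithin] with t' h1 h2
  have hdiff : ∀ t ∈ S, ∀ y ∈ closedBall x r, DifferentiableAt ℂ (F t) y := fun t ht y hy =>
    (hd t ht).differentiableAt (hB.mem_nhds (hrB hy))
  have := norm_fderiv_le (f := F t' - F t) (x := x) (M := ε * r / 2) hr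
    (fun y hy => (hdiff t' h2 y hy).sub (hdiff t ht y hy))
    (fun y hy => by simpa [dist_eq_norm] using (h1 y hy).le)
  rw [fderiv_sub (hdiff t' h2 x (mem_closedBall_self hr.le))
    (hdiff t ht x (mem_closedBall_self hr.le))] at this
  rw [dist_eq_norm]
  refine this.trans_lt ?_
  rw [div_lt_iff₀ hr]; nlinarith [mul_pos hε hr]

theorem continuousOn_fderiv {f : E → ℂ} {U : Set E} (hU : IsOpen U) (hf : DifferentiableOn ℂ f U) :
    ContinuousOn (fderiv ℂ f) U := by
  intro x hx
  obtain ⟨r, hr, hrU⟩ := Metric.isOpen_iff.1 hU x hx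
  have h2 : ∀ t ∈ ball x (r / 2), ∀ y ∈ ball (0 : E) (r / 2), t + y ∈ U := fun t ht y hy => by
    apply hrU
    rw [mem_ball, dist_eq_norm] at *
    calc ‖t + y - x‖ = ‖(t - x) + (y - 0)‖ := by congr 1; abel
      _ ≤ ‖t - x‖ + ‖y - 0‖ := norm_add_le _ _
      _ < r := by linarith
  have := continuousOn_fderiv_param (S := ball x (r / 2)) (B := ball (0 : E) (r / 2)) isOpen_ball
    (F := fun t y => f (t + y))
    (hf.continuousOn.comp (by fun_prop) (fun p hp => h2 _ hp.1 _ hp.2))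
    (fun t ht y hy => ((hf.differentiableAt (hU.mem_nhds (h2 t ht y hy))).comp y
      (by fun_prop)).differentiableWithinAt) (x := 0) (mem_ball_self (by positivity))
  have h3 := this.continuousAt (ball_mem_nhds x (by positivity))
  simp only [fderiv_comp_add_left, add_zero] at h3
  exact h3.continuousWithinAt

/-- Differentiation under the integral sign, for jointly continuous functions that are holomorphic
in the parameter, integrated over a compact set. -/
theorem hasFDerivAt_integral_param {α : Type*} [TopologicalSpace α] [MeasurableSpace α]
    [OpensMeasurableSpace α] {S : Set α} (hS : IsCompact S)
    (hSm : MeasurableSet S) {μ : Measure α} [IsFiniteMeasure μ] (hμ : ∀ᵐ t ∂μ, t ∈ S)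
    {B : Set E} (hB : IsOpen B) {F : α → E → ℂ}
    (hF : ContinuousOn (fun p : α × E => F p.1 p.2) (S ×ˢ B))
    (hd : ∀ t ∈ S, DifferentiableOn ℂ (F t) B) {x : E} (hx : x ∈ B) :
    Integrable (fun t => fderiv ℂ (F t) x) μ ∧
      HasFDerivAt (fun x => ∫ t, F t x ∂μ) (∫ t, fderiv ℂ (F t) x ∂μ) x := by
  have : ProperSpace E := FiniteDimensional.proper ℂ E
  have hres : μ.restrict S = μ := Measure.restrict_eq_self_of_ae_mem hμ
  obtain ⟨r, hr, hrB⟩ := nhds_basis_closedBall.mem_iff.1 (hB.mem_nhds hx)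
  obtain ⟨M, hM⟩ := (hS.prod (isCompact_closedBall x r)).exists_bound_of_continuousOn
    (hF.mono (prod_mono_right hrB))
  have hcont : ∀ y ∈ B, ContinuousOn (fun t => F t y) S := fun y hy =>
    hF.comp (f := fun t => (t, y)) (by fun_prop) (fun t ht => ⟨ht, hy⟩)
  have hmeas : ∀ y ∈ B, AEStronglyMeasurable (fun t => F t y) μ := fun y hy => by
    rw [← hres]; exact (hcont y hy).aestronglyMeasurable_of_isCompact hS hSm
  have hbd : ∀ᵐ t ∂μ, ∀ y ∈ closedBall x (r / 2), ‖fderiv ℂ (F t) y‖ ≤ M / (r / 2) := by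
    filter_upwards [hμ] with t ht y hy
    have hsub : closedBall y (r / 2) ⊆ closedBall x r := closedBall_subset_closedBall' (by
      rw [mem_closedBall] at hy; linarith)
    exact norm_fderiv_le (by positivity)
      (fun z hz => (hd t ht).differentiableAt (hB.mem_nhds (hrB (hsub hz))))
      (fun z hz => hM (t, z) ⟨ht, hsub hz⟩)
  have hm' : AEStronglyMeasurable (fun t => fderiv ℂ (F t) x) μ := by
    rw [← hres]
    exact (continuousOn_fderiv_param hB hF hd hx).aestronglyMeasurable_of_isCompact hS hSm
  refine ⟨Integrable.of_bound hm' (M / (r / 2)) ?_,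
    hasFDerivAt_integral_of_dominated_of_fderiv_le
    (F := fun x t => F t x) (F' := fun x t => fderiv ℂ (F t) x) (s := closedBall x (r / 2))
    (bound := fun _ => M / (r / 2)) (closedBall_mem_nhds x (by positivity)) ?_ ?_ hm' hbd
    (integrable_const _) ?_⟩
  · filter_upwards [hbd] with t ht using ht x (mem_closedBall_self (by positivity))
  · filter_upwards [hB.mem_nhds hx] with y hy using hmeas y hy
  · refine Integrable.of_bound (hmeas x hx) M ?_
    filter_upwards [hμ] with t ht using hM (t, x) ⟨ht, mem_closedBall_self hr.le⟩
  · filter_upwards [hμ] with t ht y hy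
    exact ((hd t ht).differentiableAt (hB.mem_nhds (hrB
      (closedBall_subset_closedBall (by linarith) hy)))).hasFDerivAt

theorem differentiableOn_integral_param {α : Type*} [TopologicalSpace α] [MeasurableSpace α]
    [OpensMeasurableSpace α] {S : Set α} (hS : IsCompact S)
    (hSm : MeasurableSet S) {μ : Measure α} [IsFiniteMeasure μ] (hμ : ∀ᵐ t ∂μ, t ∈ S)
    {B : Set E} (hB : IsOpen B) {F : α → E → ℂ}
    (hF : ContinuousOn (fun p : α × E => F p.1 p.2) (S ×ˢ B))
    (hd : ∀ t ∈ S, DifferentiableOn ℂ (F t) B) :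
    DifferentiableOn ℂ (fun x => ∫ t, F t x ∂μ) B := fun _ hx =>
  (hasFDerivAt_integral_param hS hSm hμ hB hF hd hx).2.differentiableAt.differentiableWithinAt

/-- Circle integrals of holomorphic families are holomorphic in the parameter. -/
theorem differentiableOn_circleIntegral_param {c : ℂ} {R : ℝ} {B : Set E} (hR : 0 ≤ R)
    (hB : IsOpen B) {F : ℂ → E → ℂ}
    (hF : ContinuousOn (fun p : ℂ × E => F p.1 p.2) (sphere c R ×ˢ B))
    (hd : ∀ t ∈ sphere c R, DifferentiableOn ℂ (F t) B) :
    DifferentiableOn ℂ (fun x => ∮ t in C(c, R), F t x) B := by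
  simp only [circleIntegral, intervalIntegral.integral_of_le Real.two_pi_pos.le]
  refine differentiableOn_integral_param (S := Icc 0 (2 * Real.pi)) isCompact_Icc
    measurableSet_Icc ?_ hB ?_ ?_
  · filter_upwards [ae_restrict_mem measurableSet_Ioc] with t ht using Ioc_subset_Icc_self ht
  · refine ContinuousOn.smul (f := fun p : ℝ × E => deriv (circleMap c R) p.1) ?_
      (hF.comp (f := fun p : ℝ × E => (circleMap c R p.1, p.2)) ?_ ?_)
    · simp only [deriv_circleMap]
      exact (((continuous_circleMap 0 R).comp continuous_fst).mul continuous_const).continuousOn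
    · exact (((continuous_circleMap c R).comp continuous_fst).prodMk continuous_snd).continuousOn
    · exact fun p hp => ⟨circleMap_mem_sphere c hR _, hp.2⟩
  · exact fun t _ => (hd _ (circleMap_mem_sphere c hR t)).const_smul (deriv (circleMap c R) t)

theorem differentiableOn_fderiv_apply {f : E → ℂ} {U : Set E} (hU : IsOpen U)
    (hf : DifferentiableOn ℂ f U) (v : E) : DifferentiableOn ℂ (fun x => fderiv ℂ f x v) U := by
  intro x hx
  obtain ⟨r, hr, hrU⟩ := Metric.isOpen_iff.1 hU x hx
  obtain ⟨ρ, hρ, hρr⟩ : ∃ ρ : ℝ, 0 < ρ ∧ ρ * ‖v‖ < r / 2 := by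
    refine ⟨r / 4 / (‖v‖ + 1), by positivity, ?_⟩
    rw [div_mul_eq_mul_div, div_lt_iff₀ (by positivity)]
    nlinarith [norm_nonneg v]
  have hmem : ∀ l ∈ closedBall (0 : ℂ) ρ, ∀ y ∈ ball x (r / 2), y + l • v ∈ U := by
    intro l hl y hy
    apply hrU
    rw [mem_closedBall_zero_iff] at hl
    rw [mem_ball, dist_eq_norm] at *
    calc ‖y + l • v - x‖ = ‖(y - x) + l • v‖ := by congr 1; abel
      _ ≤ ‖y - x‖ + ‖l‖ * ‖v‖ := (norm_add_le _ _).trans (by rw [norm_smul])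
      _ < r := by nlinarith [mul_le_mul_of_nonneg_right hl (norm_nonneg v)]
  have hd : ∀ l ∈ closedBall (0 : ℂ) ρ, ∀ y ∈ ball x (r / 2), DifferentiableAt ℂ f (y + l • v) :=
    fun l hl y hy => hf.differentiableAt (hU.mem_nhds (hmem l hl y hy))
  have key : ∀ y ∈ ball x (r / 2), fderiv ℂ f y v =
      (2 * Real.pi * Complex.I : ℂ)⁻¹ * ∮ l in C(0, ρ), (l ^ 2)⁻¹ * f (y + l • v) := by
    intro y hy
    have hdi : DifferentiableOn ℂ (fun l : ℂ => f (y + l • v)) (closedBall 0 ρ) := fun l hl =>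
      (hasDerivAt_line (hd l hl y hy)).differentiableAt.differentiableWithinAt
    have h1 := (hasDerivAt_line (f := f) (x := y) (v := v) (l := 0)
      (hd 0 (by simp; positivity) y hy)).deriv
    have h2 := Complex.two_pi_I_inv_smul_circleIntegral_sub_sq_inv_smul_of_differentiable
      (U := {l : ℂ | y + l • v ∈ U}) (c := 0) (R := ρ) (w₀ := 0) (hU.preimage (by fun_prop))
      (fun l hl => hmem l hl y hy) (fun l hl => (hasDerivAt_line (hf.differentiableAt
        (hU.mem_nhds hl))).differentiableAt.differentiableWithinAt) (mem_ball_self hρ)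
      (f := fun l : ℂ => f (y + l • v))
    rw [h1] at h2
    simpa using h2.symm
  have hx' : x ∈ ball x (r / 2) := mem_ball_self (by positivity)
  have h3 : DifferentiableOn ℂ (fun y => ∮ l in C(0, ρ), (l ^ 2)⁻¹ * f (y + l • v))
      (ball x (r / 2)) := by
    refine differentiableOn_circleIntegral_param hρ.le isOpen_ball
      (F := fun l y => (l ^ 2)⁻¹ * f (y + l • v)) ?_ ?_
    · refine ContinuousOn.mul (ContinuousOn.inv₀ (by fun_prop) ?_)
        (hf.continuousOn.comp (by fun_prop) fun p hp =>
          hmem p.1 (sphere_subset_closedBall hp.1) p.2 hp.2)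
      rintro ⟨l, y⟩ ⟨hl, -⟩ h0
      have : l = 0 := by simpa using h0
      rw [this] at hl
      simp at hl; exact hρ.ne hl
    · intro l hl y hy
      exact (((hd l (sphere_subset_closedBall hl) y hy).comp y (f := fun y => y + l • v)
        (by fun_prop)).const_mul _).differentiableWithinAt
  have h4 := ((h3.differentiableAt (isOpen_ball.mem_nhds hx')).const_mul
    (2 * Real.pi * Complex.I : ℂ)⁻¹)
  refine (h4.congr_of_eventuallyEq ?_).differentiableWithinAt
  filter_upwards [isOpen_ball.mem_nhds hx'] with y hy using key y hy

/-- Mixed second derivatives of a holomorphic function commute. -/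
theorem fderiv_fderiv_symm {f : E → ℂ} {U : Set E} (hU : IsOpen U)
    (hf : DifferentiableOn ℂ f U) {x : E} (hx : x ∈ U) (v w : E) :
    fderiv ℂ (fun y => fderiv ℂ f y v) x w = fderiv ℂ (fun y => fderiv ℂ f y w) x v := by
  have hd : DifferentiableAt ℂ (fderiv ℂ f) x := by
    let b := Module.finBasis ℂ E
    have h1 : ∀ y, fderiv ℂ f y = ∑ i, (fderiv ℂ f y (b i)) •
        (LinearMap.toContinuousLinearMap (b.coord i)) := fun y => by
      ext u
      conv_lhs => rw [← b.sum_repr u, map_sum]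
      simp [mul_comm]
    rw [funext h1]
    refine DifferentiableAt.fun_sum fun i _ => DifferentiableAt.smul_const ?_ _
    exact (differentiableOn_fderiv_apply hU hf (b i)).differentiableAt (hU.mem_nhds hx)
  have h2 : ∀ v w, fderiv ℂ (fun y => fderiv ℂ f y v) x w = fderiv ℂ (fderiv ℂ f) x w v := by
    intro v w
    rw [fderiv_clm_apply hd (by fun_prop)]
    simp
  rw [h2, h2]
  refine second_derivative_symmetric_of_eventually (f := f) (𝕜 := ℂ) ?_ hd.hasFDerivAt w v
  filter_upwards [hU.mem_nhds hx] with y hy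
  exact (hf.differentiableAt (hU.mem_nhds hy)).hasFDerivAt

/-- Derivatives of an integral depending holomorphically on a parameter. -/
theorem fderiv_integral_param {α : Type*} [TopologicalSpace α] [MeasurableSpace α]
    [OpensMeasurableSpace α] {S : Set α} (hS : IsCompact S)
    (hSm : MeasurableSet S) {μ : Measure α} [IsFiniteMeasure μ] (hμ : ∀ᵐ t ∂μ, t ∈ S)
    {B : Set E} (hB : IsOpen B) {F : α → E → ℂ}
    (hF : ContinuousOn (fun p : α × E => F p.1 p.2) (S ×ˢ B))
    (hd : ∀ t ∈ S, DifferentiableOn ℂ (F t) B) {x : E} (hx : x ∈ B) (v : E) :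
    fderiv ℂ (fun x => ∫ t, F t x ∂μ) x v = ∫ t, fderiv ℂ (F t) x v ∂μ := by
  obtain ⟨hi, h⟩ := hasFDerivAt_integral_param hS hSm hμ hB hF hd hx
  rw [h.fderiv, ContinuousLinearMap.integral_apply hi]

end

/-! ### The `∂̄`-Jacobian and Stokes' theorem -/

section

variable {ι : Type*} [Fintype ι] [DecidableEq ι]

/-- The Cauchy–Riemann operator `2 ∂/∂ζ̄ₖ = ∂/∂(Re ζₖ) + i ∂/∂(Im ζₖ)`. -/
noncomputable def dbar (k : ι) (g : (ι → ℂ) → ℂ) (ζ : ι → ℂ) : ℂ :=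
  fderiv ℝ g ζ (Pi.single k 1) + Complex.I * fderiv ℝ g ζ (Pi.single k Complex.I)

theorem dbar_holo {k : ι} {g : (ι → ℂ) → ℂ} {ζ : ι → ℂ} (h : DifferentiableAt ℂ g ζ) :
    dbar k g ζ = 0 := by
  have h1 : (Pi.single k Complex.I : ι → ℂ) = Complex.I • Pi.single k 1 := by
    rw [← Pi.single_smul]; simp
  rw [dbar, h.fderiv_restrictScalars ℝ]
  simp only [ContinuousLinearMap.coe_restrictScalars', h1, map_smul, smul_eq_mul]
  rw [← mul_assoc, Complex.I_mul_I]; ring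

omit [Fintype ι] in
theorem dbar_congr {k : ι} {g h : (ι → ℂ) → ℂ} {ζ : ι → ℂ} (e : g =ᶠ[𝓝 ζ] h) :
    dbar k g ζ = dbar k h ζ := by
  rw [dbar, dbar, e.fderiv_eq]

theorem dbar_const (k : ι) (c : ℂ) (ζ : ι → ℂ) : dbar k (fun _ => c) ζ = 0 :=
  dbar_holo (by fun_prop)

theorem dbar_add {k : ι} {g h : (ι → ℂ) → ℂ} {ζ : ι → ℂ} (hg : DifferentiableAt ℝ g ζ)
    (hh : DifferentiableAt ℝ h ζ) : dbar k (fun z => g z + h z) ζ = dbar k g ζ + dbar k h ζ := by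
  simp only [dbar, fderiv_fun_add hg hh, _root_.add_apply]; ring

theorem dbar_sub {k : ι} {g h : (ι → ℂ) → ℂ} {ζ : ι → ℂ} (hg : DifferentiableAt ℝ g ζ)
    (hh : DifferentiableAt ℝ h ζ) : dbar k (fun z => g z - h z) ζ = dbar k g ζ - dbar k h ζ := by
  simp only [dbar, fderiv_fun_sub hg hh, _root_.sub_apply]; ring

theorem dbar_mul {k : ι} {g h : (ι → ℂ) → ℂ} {ζ : ι → ℂ} (hg : DifferentiableAt ℝ g ζ)
    (hh : DifferentiableAt ℝ h ζ) :
    dbar k (fun z => g z * h z) ζ = dbar k g ζ * h ζ + g ζ * dbar k h ζ := by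
  simp only [dbar, fderiv_fun_mul hg hh, _root_.add_apply,
    _root_.smul_apply, smul_eq_mul]; ring

theorem dbar_sum {k : ι} {κ : Type*} {s : Finset κ} {g : κ → (ι → ℂ) → ℂ} {ζ : ι → ℂ}
    (hg : ∀ i ∈ s, DifferentiableAt ℝ (g i) ζ) :
    dbar k (fun z => ∑ i ∈ s, g i z) ζ = ∑ i ∈ s, dbar k (g i) ζ := by
  simp only [dbar, fderiv_fun_sum hg, _root_.sum_apply, Finset.mul_sum,
    Finset.sum_add_distrib]

theorem dbar_prod {k : ι} {κ : Type*} [DecidableEq κ] {s : Finset κ} {g : κ → (ι → ℂ) → ℂ}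
    {ζ : ι → ℂ} (hg : ∀ i ∈ s, DifferentiableAt ℝ (g i) ζ) :
    dbar k (fun z => ∏ i ∈ s, g i z) ζ = ∑ i ∈ s, (∏ j ∈ s.erase i, g j ζ) * dbar k (g i) ζ := by
  have : fderiv ℝ (fun z => ∏ i ∈ s, g i z) ζ =
      ∑ i ∈ s, (∏ j ∈ s.erase i, g j ζ) • fderiv ℝ (g i) ζ :=
    (HasFDerivAt.finsetProd fun i hi => (hg i hi).hasFDerivAt).fderiv
  simp only [dbar, this, _root_.sum_apply, _root_.smul_apply,
    smul_eq_mul, Finset.mul_sum, ← Finset.sum_add_distrib]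
  exact Finset.sum_congr rfl fun i _ => by ring

theorem dbar_div {k : ι} {g h : (ι → ℂ) → ℂ} {ζ : ι → ℂ} (hg : DifferentiableAt ℝ g ζ)
    (hh : DifferentiableAt ℝ h ζ) (h0 : h ζ ≠ 0) :
    dbar k (fun z => g z / h z) ζ = (dbar k g ζ * h ζ - g ζ * dbar k h ζ) / h ζ ^ 2 := by
  have h1 : DifferentiableAt ℝ (fun z => g z / h z) ζ := by
    simp only [div_eq_mul_inv]
    exact hg.mul (hh.inv h0)
  have h2 : dbar k (fun z => g z / h z * h z) ζ = dbar k g ζ := by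
    refine dbar_congr ?_
    filter_upwards [hh.continuousAt.eventually_ne h0] with z hz
    field_simp
  rw [dbar_mul h1 hh] at h2
  rw [← h2]
  field_simp
  ring

theorem contDiff_dbar {k : ι} {g : (ι → ℂ) → ℂ} (hg : ContDiff ℝ ∞ g) :
    ContDiff ℝ ∞ (dbar k g) := by
  have h : ContDiff ℝ ∞ (fderiv ℝ g) := hg.fderiv_right (m := ∞) le_rfl
  exact (h.clm_apply contDiff_const).add (contDiff_const.mul (h.clm_apply contDiff_const))

theorem dbar_comm {k l : ι} {g : (ι → ℂ) → ℂ} (hg : ContDiff ℝ ∞ g) (ζ : ι → ℂ) :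
    dbar k (dbar l g) ζ = dbar l (dbar k g) ζ := by
  have hd : Differentiable ℝ (fderiv ℝ g) :=
    (hg.fderiv_right (m := ∞) le_rfl).differentiable (by simp)
  have h1 : ∀ v, DifferentiableAt ℝ (fun z => fderiv ℝ g z v) ζ := fun v =>
    (hd ζ).clm_apply (by fun_prop)
  have h2 : ∀ v w, fderiv ℝ (fun y => fderiv ℝ g y v) ζ w = fderiv ℝ (fderiv ℝ g) ζ w v := by
    intro v w
    rw [fderiv_clm_apply (hd ζ) (by fun_prop)]
    simp
  have hs : ∀ v w, fderiv ℝ (fderiv ℝ g) ζ w v = fderiv ℝ (fderiv ℝ g) ζ v w := fun v w =>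
    second_derivative_symmetric_of_eventually (f := g) (f' := fderiv ℝ g)
      (Eventually.of_forall fun y => (hg.differentiable (by simp) y).hasFDerivAt)
      (hd ζ).hasFDerivAt w v
  have h3 : ∀ k l, dbar k (dbar l g) ζ = fderiv ℝ (fderiv ℝ g) ζ (Pi.single k 1) (Pi.single l 1) +
      Complex.I * fderiv ℝ (fderiv ℝ g) ζ (Pi.single k 1) (Pi.single l Complex.I) +
      Complex.I * (fderiv ℝ (fderiv ℝ g) ζ (Pi.single k Complex.I) (Pi.single l 1) +
      Complex.I * fderiv ℝ (fderiv ℝ g) ζ (Pi.single k Complex.I) (Pi.single l Complex.I)) := by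
    intro k l
    have : dbar l g = fun z => fderiv ℝ g z (Pi.single l 1) +
      Complex.I * fderiv ℝ g z (Pi.single l Complex.I) := rfl
    rw [dbar, this, fderiv_fun_add (h1 _) ((h1 _).const_mul _), fderiv_const_mul (h1 _)]
    simp only [_root_.add_apply, _root_.smul_apply, smul_eq_mul, h2]
  rw [h3, h3, hs (Pi.single k 1) (Pi.single l 1), hs (Pi.single k Complex.I) (Pi.single l 1),
    hs (Pi.single k 1) (Pi.single l Complex.I), hs (Pi.single k Complex.I) (Pi.single l Complex.I)]
  ring

/-- The integral of a compactly supported `∂̄`-derivative vanishes. -/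
theorem integral_dbar {k : ι} {H : (ι → ℂ) → ℂ} (hH : ContDiff ℝ 1 H) (hc : HasCompactSupport H) :
    Integrable (dbar k H) ∧ ∫ ζ, dbar k H ζ = 0 := by
  have hcf : Continuous (fderiv ℝ H) := hH.continuous_fderiv (by simp)
  have hi : ∀ v, Integrable (fun ζ => fderiv ℝ H ζ v) := fun v =>
    (hcf.clm_apply continuous_const).integrable_of_hasCompactSupport
      (hc.fderiv_apply (𝕜 := ℝ) v)
  have h0 : ∀ v, ∫ ζ, fderiv ℝ H ζ v = 0 := fun v => by
    have := integral_mul_fderiv_eq_neg_fderiv_mul_of_integrable (μ := volume) (𝕜 := ℂ)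
      (f := fun _ : ι → ℂ => (1 : ℂ)) (g := H) (v := v) (by simp) (by simpa using hi v)
      (by simpa using hH.continuous.integrable_of_hasCompactSupport hc) (by fun_prop)
      (fun _ _ => hH.differentiable (by simp) _)
    simpa using this
  refine ⟨(hi _).add ((hi _).const_mul _), ?_⟩
  simp only [dbar]
  rw [integral_add (hi _) ((hi _).const_mul _), integral_const_mul, h0, h0]
  simp

/-- The determinant of the `∂̄`-Jacobian `(∂̄ₖ Gⱼ)`; up to a constant, the coefficient of the
Cauchy–Fantappiè form `∂̄G₁ ∧ ⋯ ∧ ∂̄Gₘ ∧ dζ₁ ∧ ⋯ ∧ dζₘ`. -/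
noncomputable def dbarDet (G : ι → (ι → ℂ) → ℂ) (ζ : ι → ℂ) : ℂ :=
  (Matrix.of fun k j => dbar k (G j) ζ).det

theorem dbarDet_eq (G : ι → (ι → ℂ) → ℂ) (ζ : ι → ℂ) (j₀ : ι) : dbarDet G ζ =
    ∑ σ : Equiv.Perm ι, dbar (σ j₀) (G j₀) ζ *
      ((Equiv.Perm.sign σ : ℤ) * ∏ j ∈ Finset.univ.erase j₀, dbar (σ j) (G j) ζ) := by
  rw [dbarDet, Matrix.det_apply']
  refine Finset.sum_congr rfl fun σ _ => ?_
  rw [← Finset.mul_prod_erase _ _ (Finset.mem_univ j₀)]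
  simp only [Matrix.of_apply]; ring

/-- In the expansion of a `∂̄`-Jacobian determinant along the column `j₀`, the vector of cofactors is
divergence free with respect to `∂̄`. -/
theorem sum_dbar_cofactor {G : ι → (ι → ℂ) → ℂ} (hG : ∀ j, ContDiff ℝ ∞ (G j)) (j₀ : ι)
    (ζ : ι → ℂ) : ∑ σ : Equiv.Perm ι, dbar (σ j₀) (fun z => ((Equiv.Perm.sign σ : ℤ) : ℂ) *
      ∏ j ∈ Finset.univ.erase j₀, dbar (σ j) (G j) z) ζ = 0 := by
  have hd : ∀ k j, DifferentiableAt ℝ (dbar k (G j)) ζ := fun k j =>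
    (contDiff_dbar (hG j)).differentiable (by simp) ζ
  have h1 : ∀ σ : Equiv.Perm ι, dbar (σ j₀) (fun z => ((Equiv.Perm.sign σ : ℤ) : ℂ) *
      ∏ j ∈ Finset.univ.erase j₀, dbar (σ j) (G j) z) ζ =
      ∑ i ∈ Finset.univ.erase j₀, ((Equiv.Perm.sign σ : ℤ) : ℂ) *
        ((∏ j ∈ (Finset.univ.erase j₀).erase i, dbar (σ j) (G j) ζ) *
          dbar (σ j₀) (dbar (σ i) (G i)) ζ) := by
    intro σ
    have hp : DifferentiableAt ℝ (fun z => ∏ j ∈ Finset.univ.erase j₀, dbar (σ j) (G j) z) ζ :=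
      (contDiff_prod fun j _ => contDiff_dbar (hG j)).differentiable (n := ∞) (by simp) ζ
    rw [dbar_mul (by fun_prop) hp, dbar_const, zero_mul, zero_add,
      dbar_prod (fun j _ => hd _ _), Finset.mul_sum]
  rw [Finset.sum_congr rfl fun σ _ => h1 σ, Finset.sum_comm]
  refine Finset.sum_eq_zero fun i hi => ?_
  have hne : j₀ ≠ i := (Finset.ne_of_mem_erase hi).symm
  -- exchanging the roles of `σ j₀` and `σ i` changes the sign of the summand
  set T : Equiv.Perm ι → ℂ := fun σ => ((Equiv.Perm.sign σ : ℤ) : ℂ) *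
        ((∏ j ∈ (Finset.univ.erase j₀).erase i, dbar (σ j) (G j) ζ) *
          dbar (σ j₀) (dbar (σ i) (G i)) ζ) with hT
  have h2 : ∀ σ, T (σ * Equiv.swap j₀ i) = -T σ := by
    intro σ
    have h3 : ∏ j ∈ (Finset.univ.erase j₀).erase i,
        dbar ((σ * Equiv.swap j₀ i) j) (G j) ζ =
        ∏ j ∈ (Finset.univ.erase j₀).erase i, dbar (σ j) (G j) ζ := by
      refine Finset.prod_congr rfl fun j hj => ?_
      rw [Finset.mem_erase, Finset.mem_erase] at hj
      rw [Equiv.Perm.mul_apply, Equiv.swap_apply_of_ne_of_ne hj.2.1 hj.1]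
    simp only [hT, h3]
    rw [Equiv.Perm.mul_apply, Equiv.Perm.mul_apply, Equiv.swap_apply_left,
      Equiv.swap_apply_right, dbar_comm (hG i), Equiv.Perm.sign_mul, Equiv.Perm.sign_swap hne]
    push_cast; ring
  have h4 : ∑ σ, T σ = -∑ σ, T σ := by
    rw [← Finset.sum_neg_distrib, ← Equiv.sum_comp (Equiv.mulRight (Equiv.swap j₀ i)) T]
    exact Finset.sum_congr rfl fun σ _ => h2 σ
  exact self_eq_neg.1 h4

theorem continuous_dbarDet {G : ι → (ι → ℂ) → ℂ} (hG : ∀ j, ContDiff ℝ ∞ (G j)) :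
    Continuous (dbarDet G) :=
  Continuous.matrix_det (continuous_matrix fun _ j => (contDiff_dbar (hG j)).continuous)

omit [DecidableEq ι] in
theorem contDiff_one_of_entire {f : (ι → ℂ) → ℂ} (hf : Differentiable ℂ f) : ContDiff ℝ 1 f :=
  (contDiff_one_iff_fderiv.2 ⟨hf, continuousOn_univ.1
    (continuousOn_fderiv isOpen_univ hf.differentiableOn)⟩ : ContDiff ℂ 1 f).restrict_scalars ℝ

/-- Stokes' theorem: since cofactors are divergence free, `f * dbarDet G` is a sum of
`∂̄`-derivatives of compactly supported functions as soon as one component of `G` has compact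
support. -/
theorem integral_dbarDet_eq_zero {f : (ι → ℂ) → ℂ} (hf : Differentiable ℂ f)
    {G : ι → (ι → ℂ) → ℂ} (hG : ∀ j, ContDiff ℝ ∞ (G j)) {j₀ : ι}
    (hc : HasCompactSupport (G j₀)) :
    ∫ ζ, f ζ * dbarDet G ζ = 0 := by
  set Q : Equiv.Perm ι → (ι → ℂ) → ℂ := fun σ z => ((Equiv.Perm.sign σ : ℤ) : ℂ) *
      ∏ j ∈ Finset.univ.erase j₀, dbar (σ j) (G j) z with hQ
  have hQd : ∀ σ, ContDiff ℝ ∞ (Q σ) := fun σ =>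
    contDiff_const.mul (contDiff_prod fun j _ => contDiff_dbar (hG j))
  have hf1 := contDiff_one_of_entire hf
  have hH : ∀ σ, ContDiff ℝ 1 (fun z => f z * (G j₀ z * Q σ z)) := fun σ =>
    hf1.mul (((hG j₀).mul (hQd σ)).of_le (by simp))
  have hHc : ∀ σ, HasCompactSupport (fun z => f z * (G j₀ z * Q σ z)) := fun σ =>
    (hc.mul_right (f' := Q σ)).mul_left (f := f)
  have key : ∀ ζ, f ζ * dbarDet G ζ =
      ∑ σ : Equiv.Perm ι, dbar (σ j₀) (fun z => f z * (G j₀ z * Q σ z)) ζ := by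
    intro ζ
    have hGd : DifferentiableAt ℝ (G j₀) ζ := (hG j₀).differentiable (by simp) ζ
    have hQd' : ∀ σ, DifferentiableAt ℝ (Q σ) ζ := fun σ => (hQd σ).differentiable (by simp) ζ
    have h1 : ∀ σ : Equiv.Perm ι, dbar (σ j₀) (fun z => f z * (G j₀ z * Q σ z)) ζ =
        f ζ * (dbar (σ j₀) (G j₀) ζ * Q σ ζ) + f ζ * G j₀ ζ * dbar (σ j₀) (Q σ) ζ := by
      intro σ
      rw [dbar_mul (hf1.differentiable (by simp) ζ) (hGd.fun_mul (hQd' σ)), dbar_holo (hf ζ),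
        dbar_mul hGd (hQd' σ)]
      ring
    rw [Finset.sum_congr rfl fun σ _ => h1 σ, Finset.sum_add_distrib, ← Finset.mul_sum,
      ← Finset.mul_sum, sum_dbar_cofactor hG j₀ ζ, dbarDet_eq G ζ j₀]
    simp [hQ]
  simp only [key]
  rw [integral_finsetSum _ fun σ _ => (integral_dbar (hH σ) (hHc σ)).1]
  exact Finset.sum_eq_zero fun σ _ => (integral_dbar (hH σ) (hHc σ)).2

/-- A compactly supported change of `G` does not affect the integral against an entire function. -/
theorem integral_dbarDet_congr {f : (ι → ℂ) → ℂ} (hf : Differentiable ℂ f)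
    {G G' : ι → (ι → ℂ) → ℂ} (hG : ∀ j, ContDiff ℝ ∞ (G j)) (hG' : ∀ j, ContDiff ℝ ∞ (G' j))
    (hc : ∀ j, HasCompactSupport (G j - G' j)) (hi : HasCompactSupport (dbarDet G))
    (hi' : HasCompactSupport (dbarDet G')) :
    ∫ ζ, f ζ * dbarDet G ζ = ∫ ζ, f ζ * dbarDet G' ζ := by
  set P : Finset ι → ι → (ι → ℂ) → ℂ := fun s j => if j ∈ s then G' j else G j with hP
  have hPd : ∀ s j, ContDiff ℝ ∞ (P s j) := fun s j => by
    simp only [hP]; split_ifs; exacts [hG' j, hG j]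
  have key : ∀ s : Finset ι, Integrable (fun ζ => f ζ * (dbarDet G ζ - dbarDet (P s) ζ)) ∧
      ∫ ζ, f ζ * (dbarDet G ζ - dbarDet (P s) ζ) = 0 := by
    intro s
    induction s using Finset.induction_on with
    | empty => simp [hP]
    | insert i s hi ih =>
      set D : ι → (ι → ℂ) → ℂ := Function.update (P s) i (G i - G' i) with hD
      have hDd : ∀ j, ContDiff ℝ ∞ (D j) := fun j => by
        simp only [hD, Function.update_apply]; split_ifs
        exacts [(hG i).sub (hG' i), hPd s j]
      have hDi : D i = G i - G' i := by simp [hD]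
      have hdiff : ∀ ζ, dbarDet D ζ = dbarDet (P s) ζ - dbarDet (P (insert i s)) ζ := by
        intro ζ
        rw [dbarDet_eq _ ζ i, dbarDet_eq _ ζ i, dbarDet_eq _ ζ i, ← Finset.sum_sub_distrib]
        refine Finset.sum_congr rfl fun σ _ => ?_
        have e1 : ∀ j ∈ Finset.univ.erase i, D j = P s j := fun j hj => by
          simp [hD, Finset.ne_of_mem_erase hj]
        have e2 : ∀ j ∈ Finset.univ.erase i, P (insert i s) j = P s j := fun j hj => by
          simp [hP, Finset.ne_of_mem_erase hj]
        rw [Finset.prod_congr rfl fun j hj => by rw [e1 j hj],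
          Finset.prod_congr (g := fun j => dbar (σ j) (P s j) ζ) (f := fun j =>
            dbar (σ j) (P (insert i s) j) ζ) rfl fun j hj => by rw [e2 j hj], ← sub_mul]
        congr 1
        have e3 : P s i = G i := by simp [hP, hi]
        have e4 : P (insert i s) i = G' i := by simp [hP]
        rw [hDi, e3, e4]
        exact dbar_sub ((hG i).differentiable (by simp) ζ) ((hG' i).differentiable (by simp) ζ)
      have hDc : HasCompactSupport (dbarDet D) := by
        refine HasCompactSupport.intro (hc i) fun ζ hζ => ?_
        rw [dbarDet_eq _ ζ i]
        refine Finset.sum_eq_zero fun σ _ => ?_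
        rw [hDi, dbar_congr (h := fun _ => 0) (notMem_tsupport_iff_eventuallyEq.1 hζ),
          dbar_const, zero_mul]
      have hDi' : Integrable (fun ζ => f ζ * dbarDet D ζ) :=
        (hf.continuous.mul (continuous_dbarDet hDd)).integrable_of_hasCompactSupport
          (hDc.mul_left)
      have e : (fun ζ => f ζ * (dbarDet G ζ - dbarDet (P (insert i s)) ζ)) =
          fun ζ => f ζ * (dbarDet G ζ - dbarDet (P s) ζ) + f ζ * dbarDet D ζ := by
        ext ζ; rw [hdiff]; ring
      rw [e]
      refine ⟨ih.1.add hDi', ?_⟩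
      rw [integral_add ih.1 hDi', ih.2, zero_add]
      exact integral_dbarDet_eq_zero hf hDd (j₀ := i) (by rw [hDi]; exact hc i)
  have h := (key Finset.univ).2
  have e : P Finset.univ = G' := by ext j; simp [hP]
  simp only [e, mul_sub] at h
  rw [integral_sub] at h
  · exact sub_eq_zero.1 h
  · exact (hf.continuous.mul (continuous_dbarDet hG)).integrable_of_hasCompactSupport hi.mul_left
  · exact (hf.continuous.mul (continuous_dbarDet hG')).integrable_of_hasCompactSupport hi'.mul_left

/-- The `∂̄`-Jacobian is singular wherever `∑ⱼ Gⱼ(ζ) (ζⱼ - xⱼ)` is locally constant, away from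
`x`. -/
theorem dbarDet_eq_zero {G : ι → (ι → ℂ) → ℂ} {ζ x : ι → ℂ}
    (hG : ∀ j, DifferentiableAt ℝ (G j) ζ) {c : ℂ}
    (h : ∀ᶠ z in 𝓝 ζ, ∑ j, G j z * (z j - x j) = c) (hne : ζ ≠ x) : dbarDet G ζ = 0 := by
  rw [dbarDet, ← Matrix.exists_mulVec_eq_zero_iff]
  refine ⟨ζ - x, sub_ne_zero.2 hne, ?_⟩
  ext k
  have h1 : dbar k (fun z => ∑ j, G j z * (z j - x j)) ζ = 0 := by
    rw [dbar_congr (h := fun _ => c) h, dbar_const]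
  have hl : ∀ j, DifferentiableAt ℂ (fun z : ι → ℂ => z j - x j) ζ := fun j => by fun_prop
  rw [dbar_sum fun j _ => (hG j).fun_mul ((hl j).restrictScalars ℝ)] at h1
  simp only [Matrix.mulVec, dotProduct, Matrix.of_apply, Pi.sub_apply, Pi.zero_apply]
  rw [← h1]
  refine Finset.sum_congr rfl fun j _ => ?_
  rw [dbar_mul (hG j) ((hl j).restrictScalars ℝ), dbar_holo (hl j)]
  ring

end

/-! ### The smoothed Bochner–Martinelli section -/

section

variable {ι : Type*} [Fintype ι] [DecidableEq ι]

/-- The squared Euclidean norm on `ι → ℂ` (whose own norm is the sup norm). -/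
def nsq (y : ι → ℂ) : ℝ := ∑ j, Complex.normSq (y j)

/-- A smooth function equal to `1 / r` for `r ≥ δ` and to `0` for `r ≤ δ / 2`, with `r * kap δ r`
monotone. -/
noncomputable def kap (δ r : ℝ) : ℝ := Real.smoothTransition (2 * r / δ - 1) / r

omit [DecidableEq ι] in
theorem nsq_nonneg (y : ι → ℂ) : 0 ≤ nsq y := Finset.sum_nonneg fun _ _ => Complex.normSq_nonneg _

omit [DecidableEq ι] in
theorem continuous_nsq : Continuous (nsq (ι := ι)) :=
  continuous_finsetSum _ fun j _ => Complex.continuous_normSq.comp (continuous_apply j)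

omit [DecidableEq ι] in
theorem norm_sq_le_nsq (y : ι → ℂ) : ‖y‖ ^ 2 ≤ nsq y := by
  have : ‖y‖ ≤ √(nsq y) := by
    refine (pi_norm_le_iff_of_nonneg (Real.sqrt_nonneg _)).2 fun j => Real.le_sqrt_of_sq_le ?_
    rw [← Complex.normSq_eq_norm_sq]
    exact Finset.single_le_sum (f := fun j => Complex.normSq (y j))
      (fun _ _ => Complex.normSq_nonneg _) (Finset.mem_univ j)
  calc ‖y‖ ^ 2 ≤ √(nsq y) ^ 2 := by gcongr
    _ = nsq y := Real.sq_sqrt (nsq_nonneg y)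

omit [DecidableEq ι] in
theorem ofReal_nsq (y : ι → ℂ) : (nsq y : ℂ) = ∑ j, y j * (starRingEnd ℂ) (y j) := by
  simp [nsq, Complex.mul_conj]

variable {δ : ℝ}

theorem kap_zero (hδ : 0 < δ) {r : ℝ} (hr : r ≤ δ / 2) : kap δ r = 0 := by
  rw [kap, Real.smoothTransition.zero_of_nonpos, zero_div]
  rw [sub_nonpos, div_le_one hδ]; linarith

theorem kap_mul (hδ : 0 < δ) (r : ℝ) : r * kap δ r = Real.smoothTransition (2 * r / δ - 1) := by
  rcases eq_or_ne r 0 with rfl | hr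
  · rw [zero_mul, Real.smoothTransition.zero_of_nonpos]; simp
  · rw [kap]; field_simp

theorem kap_nonneg (hδ : 0 < δ) (r : ℝ) : 0 ≤ kap δ r := by
  rcases le_total r (δ / 2) with hr | hr
  · rw [kap_zero hδ hr]
  · exact div_nonneg (Real.smoothTransition.nonneg _) (by linarith)

theorem contDiff_kap (hδ : 0 < δ) : ContDiff ℝ ∞ (kap δ) := by
  rw [contDiff_iff_contDiffAt]
  intro r
  rcases lt_or_ge r (δ / 2) with hr | hr
  · refine (contDiffAt_const (c := (0 : ℝ))).congr_of_eventuallyEq ?_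
    filter_upwards [gt_mem_nhds hr] with s hs using kap_zero hδ hs.le
  · refine ContDiffAt.div ?_ contDiffAt_id (ne_of_gt (by linarith))
    exact (Real.smoothTransition.contDiff.comp (by fun_prop)).contDiffAt

theorem deriv_kap (hδ : 0 < δ) (r : ℝ) : kap δ r + r * deriv (kap δ) r =
    deriv (fun r => Real.smoothTransition (2 * r / δ - 1)) r := by
  rw [← funext (kap_mul hδ)]
  have := (hasDerivAt_id r).mul
    (((contDiff_kap hδ).differentiable (by simp) r).hasDerivAt)
  rw [show (fun r => r * kap δ r) = id * kap δ from rfl, this.deriv]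
  simp

/-- The radial density of the local kernel. -/
noncomputable def dens (m : ℕ) (δ r : ℝ) : ℝ :=
  2 ^ m * kap δ r ^ (m - 1) * (kap δ r + r * deriv (kap δ) r)

theorem continuous_dens (m : ℕ) (hδ : 0 < δ) : Continuous (dens m δ) := by
  have h1 := (contDiff_kap hδ).continuous
  have h2 : Continuous (deriv (kap δ)) := (contDiff_kap hδ).continuous_deriv (by simp)
  unfold dens; fun_prop

theorem dens_nonneg (m : ℕ) (hδ : 0 < δ) (r : ℝ) : 0 ≤ dens m δ r := by
  have : 0 ≤ deriv (fun r => Real.smoothTransition (2 * r / δ - 1)) r := by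
    refine Monotone.deriv_nonneg (Real.smoothTransition.monotone.comp ?_)
    intro a b hab; simp only; gcongr
  rw [dens, deriv_kap hδ]
  have := kap_nonneg hδ r
  positivity

theorem dens_zero (m : ℕ) (hδ : 0 < δ) {r : ℝ} (hr : δ < r) : dens m δ r = 0 := by
  have : (fun r => Real.smoothTransition (2 * r / δ - 1)) =ᶠ[𝓝 r] fun _ => 1 := by
    filter_upwards [lt_mem_nhds hr] with s hs
    rw [Real.smoothTransition.one_of_one_le]
    rw [le_sub_iff_add_le, le_div_iff₀ hδ]; linarith
  rw [dens, deriv_kap hδ, this.deriv_eq]; simp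

theorem exists_dens_pos (m : ℕ) (hδ : 0 < δ) : ∃ r, 0 < r ∧ 0 < dens m δ r := by
  have hc : ContDiff ℝ ∞ (fun r => Real.smoothTransition (2 * r / δ - 1)) :=
    Real.smoothTransition.contDiff.comp (by fun_prop)
  obtain ⟨r, hr, h⟩ := exists_deriv_eq_slope (fun r => Real.smoothTransition (2 * r / δ - 1))
    (a := δ / 2) (b := δ) (by linarith) hc.continuous.continuousOn
    (hc.differentiable (by simp)).differentiableOn
  have hr0 : 0 < r := by linarith [hr.1]
  refine ⟨r, hr0, ?_⟩
  have e1 : 2 * δ / δ - 1 = 1 := by field_simp; norm_num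
  have e2 : 2 * (δ / 2) / δ - 1 = 0 := by field_simp; norm_num
  simp only [e1, e2, Real.smoothTransition.one, Real.smoothTransition.zero] at h
  rw [dens, deriv_kap hδ, h]
  have h1 : 0 < kap δ r := div_pos (Real.smoothTransition.pos_of_pos (by
    rw [sub_pos, one_lt_div hδ]; linarith [hr.1])) hr0
  have h2 : 0 < (1 - 0) / (δ - δ / 2) := by apply div_pos <;> linarith
  positivity

/-- The Bochner–Martinelli section `ȳ / |y|²` with its singularity at `y = 0` smoothed out. -/
noncomputable def loc (δ : ℝ) (x : ι → ℂ) (j : ι) (ζ : ι → ℂ) : ℂ :=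
  (kap δ (nsq (ζ - x)) : ℂ) * (starRingEnd ℂ) (ζ j - x j)

omit [DecidableEq ι] in
theorem contDiff_conj_coord (x : ι → ℂ) (j : ι) :
    ContDiff ℝ ∞ (fun ζ : ι → ℂ => (starRingEnd ℂ) (ζ j - x j)) := by
  have : ContDiff ℝ ∞ (fun ζ : ι → ℂ => ζ j - x j) := by fun_prop
  exact Complex.conjCLE.contDiff.comp this

omit [DecidableEq ι] in
theorem contDiff_nsq (x : ι → ℂ) : ContDiff ℝ ∞ (fun ζ : ι → ℂ => nsq (ζ - x)) := by
  have h : (fun ζ : ι → ℂ => nsq (ζ - x)) = fun ζ : ι → ℂ =>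
      ∑ j, ((ζ j - x j) * (starRingEnd ℂ) (ζ j - x j)).re := by
    ext ζ; simp only [Complex.mul_conj, Complex.ofReal_re]; rfl
  rw [h]
  refine ContDiff.sum fun j _ => Complex.reCLM.contDiff.comp
    (ContDiff.mul (by fun_prop) (contDiff_conj_coord x j))

omit [DecidableEq ι] in
theorem contDiff_loc (hδ : 0 < δ) (x : ι → ℂ) (j : ι) : ContDiff ℝ ∞ (loc δ x j) :=
  (Complex.ofRealCLM.contDiff.comp ((contDiff_kap hδ).comp (contDiff_nsq x))).mul
    (contDiff_conj_coord x j)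

theorem dbar_conj (x : ι → ℂ) (k j : ι) (ζ : ι → ℂ) :
    dbar k (fun ζ : ι → ℂ => (starRingEnd ℂ) (ζ j - x j)) ζ = if k = j then 2 else 0 := by
  have h : HasFDerivAt (fun ζ : ι → ℂ => (starRingEnd ℂ) (ζ j - x j))
      ((Complex.conjCLE : ℂ →L[ℝ] ℂ).comp (ContinuousLinearMap.proj (R := ℝ) j)) ζ := by
    refine HasFDerivAt.comp ζ (g := fun z : ℂ => (starRingEnd ℂ) z)
      (Complex.conjCLE : ℂ →L[ℝ] ℂ).hasFDerivAt ?_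
    exact (ContinuousLinearMap.proj (R := ℝ) (φ := fun _ : ι => ℂ) j).hasFDerivAt.sub_const _
  rw [dbar, h.fderiv]
  rcases eq_or_ne k j with rfl | hne
  · simp; norm_num
  · simp [hne]

theorem dbar_nsq (x : ι → ℂ) (k : ι) (ζ : ι → ℂ) :
    dbar k (fun ζ : ι → ℂ => (nsq (ζ - x) : ℂ)) ζ = 2 * (ζ k - x k) := by
  simp only [ofReal_nsq, Pi.sub_apply]
  have hl : ∀ j, DifferentiableAt ℂ (fun z : ι → ℂ => z j - x j) ζ := fun j => by fun_prop
  have hc : ∀ j, DifferentiableAt ℝ (fun ζ : ι → ℂ => (starRingEnd ℂ) (ζ j - x j)) ζ := fun j =>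
    (contDiff_conj_coord x j).differentiable (by simp) ζ
  rw [dbar_sum fun j _ => ((hl j).restrictScalars ℝ).fun_mul (hc j)]
  have : ∀ j, dbar k (fun z : ι → ℂ => (z j - x j) * (starRingEnd ℂ) (z j - x j)) ζ =
      if k = j then 2 * (ζ j - x j) else 0 := fun j => by
    rw [dbar_mul ((hl j).restrictScalars ℝ) (hc j), dbar_holo (hl j), dbar_conj]
    split_ifs <;> ring
  rw [Finset.sum_congr rfl fun j _ => this j]; simp

theorem dbar_real_comp {κ : ℝ → ℝ} {ρ : (ι → ℂ) → ℝ} {ζ : ι → ℂ} (k : ι)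
    (hκ : DifferentiableAt ℝ κ (ρ ζ)) (hρ : DifferentiableAt ℝ ρ ζ) :
    dbar k (fun z => (κ (ρ z) : ℂ)) ζ = ((deriv κ (ρ ζ) : ℝ) : ℂ) * dbar k (fun z => (ρ z : ℂ)) ζ := by
  have h1 : HasFDerivAt (fun z => (ρ z : ℂ)) (Complex.ofRealCLM.comp (fderiv ℝ ρ ζ)) ζ :=
    Complex.ofRealCLM.hasFDerivAt.comp ζ hρ.hasFDerivAt
  have h2 : HasFDerivAt (fun z => (κ (ρ z) : ℂ))
      (Complex.ofRealCLM.comp (deriv κ (ρ ζ) • fderiv ℝ ρ ζ)) ζ :=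
    Complex.ofRealCLM.hasFDerivAt.comp ζ (hκ.hasDerivAt.comp_hasFDerivAt ζ hρ.hasFDerivAt)
  rw [dbar, dbar, h1.fderiv, h2.fderiv]
  simp; ring

/-- The `∂̄`-Jacobian of the smoothed Bochner–Martinelli section is a rank one perturbation of a
multiple of the identity; its determinant is a radial density. -/
theorem dbarDet_loc [Nonempty ι] (hδ : 0 < δ) (x ζ : ι → ℂ) :
    dbarDet (loc δ x) ζ = (dens (Fintype.card ι) δ (nsq (ζ - x)) : ℂ) := by
  set r := nsq (ζ - x) with hr
  have hκ : DifferentiableAt ℝ (kap δ) r := (contDiff_kap hδ).differentiable (by simp) r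
  have h1 : ∀ k j, dbar k (loc δ x j) ζ = 2 * (kap δ r : ℂ) * (if k = j then 1 else 0) +
      2 * ((deriv (kap δ) r : ℝ) : ℂ) * ((ζ k - x k) * (starRingEnd ℂ) (ζ j - x j)) := by
    intro k j
    have hkd : DifferentiableAt ℝ (fun ζ : ι → ℂ => (kap δ (nsq (ζ - x)) : ℂ)) ζ :=
      ((Complex.ofRealCLM.contDiff.comp ((contDiff_kap hδ).comp
        (contDiff_nsq x)))).differentiable (by simp : (∞ : WithTop ℕ∞) ≠ 0) ζ
    unfold loc
    rw [dbar_mul hkd ((contDiff_conj_coord x j).differentiable (by simp) ζ),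
      dbar_real_comp (ρ := fun ζ => nsq (ζ - x)) k hκ
        ((contDiff_nsq x).differentiable (by simp) ζ), dbar_nsq, dbar_conj]
    simp only [← hr]
    split_ifs <;> ring
  have hm : Fintype.card ι = (Fintype.card ι - 1) + 1 := (Nat.succ_pred_eq_of_pos
    Fintype.card_pos).symm
  rcases eq_or_ne (kap δ r) 0 with h0 | h0
  · have h2 : deriv (kap δ) r = 0 := by
      refine IsLocalMin.deriv_eq_zero (Eventually.of_forall fun s => ?_)
      rw [h0]; exact kap_nonneg hδ s
    rw [dbarDet, dens, h0, h2]
    have : (Matrix.of fun k j => dbar k (loc δ x j) ζ) = 0 := by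
      ext k j; simp [h1, h0, h2]
    rw [this, Matrix.det_zero]
    · simp
  · have h0' : (kap δ r : ℂ) ≠ 0 := by exact_mod_cast h0
    have h2 : (Matrix.of fun k j => dbar k (loc δ x j) ζ) = (2 * (kap δ r : ℂ)) •
        (1 + Matrix.replicateCol Unit (fun k => ((deriv (kap δ) r : ℝ) : ℂ) / kap δ r * (ζ k - x k)) *
          Matrix.replicateRow Unit (fun j => (starRingEnd ℂ) (ζ j - x j))) := by
      ext k j
      simp only [Matrix.of_apply, h1, Matrix.smul_apply, Matrix.add_apply, Matrix.one_apply,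
        Matrix.mul_apply, Matrix.replicateCol_apply, Matrix.replicateRow_apply, smul_eq_mul,
        Finset.univ_unique, Finset.sum_const, Finset.card_singleton, one_smul]
      field_simp
    have h3 : ∑ i, (starRingEnd ℂ) (ζ i - x i) * (((deriv (kap δ) r : ℝ) : ℂ) / kap δ r * (ζ i - x i)) =
        ((deriv (kap δ) r : ℝ) : ℂ) / kap δ r * r := by
      rw [hr, ofReal_nsq, Finset.mul_sum]
      exact Finset.sum_congr rfl fun i _ => by simp only [Pi.sub_apply]; ring
    rw [dbarDet, h2, Matrix.det_smul, Matrix.det_one_add_replicateCol_mul_replicateRow,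
      dotProduct, h3, dens, hm]
    push_cast
    rw [mul_pow, pow_succ (kap δ r : ℂ)]
    field_simp

omit [DecidableEq ι] in
/-- The mean value property of entire functions for densities depending on `|y|²` only. -/
theorem integral_radial {f : (ι → ℂ) → ℂ} (hf : Differentiable ℂ f) {w : ℝ → ℝ}
    (hw : Continuous w) (hc : HasCompactSupport fun y : ι → ℂ => w (nsq y)) (x : ι → ℂ) :
    ∫ ζ, f ζ * w (nsq (ζ - x)) = (∫ y : ι → ℂ, (w (nsq y) : ℂ)) * f x := by
  set S := tsupport fun y : ι → ℂ => w (nsq y) with hS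
  set h : ℂ → ℂ := fun l => ∫ y : ι → ℂ, f (x + l • y) * w (nsq y) with hh
  have hwc : Continuous fun y : ι → ℂ => w (nsq y) := hw.comp continuous_nsq
  have hSm : MeasurableSet S := (isClosed_tsupport _).measurableSet
  have hd : DifferentiableOn ℂ h univ := by
    have e : h = fun l => ∫ y in S, f (x + l • y) * w (nsq y) := by
      ext l
      refine (setIntegral_eq_integral_of_forall_compl_eq_zero fun y hy => ?_).symm
      simp [image_eq_zero_of_notMem_tsupport (f := fun y : ι → ℂ => w (nsq y)) hy]
    rw [e]
    have : IsFiniteMeasure (volume.restrict S) := ⟨by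
      rw [Measure.restrict_apply_univ]; exact IsCompact.measure_lt_top hc⟩
    refine differentiableOn_integral_param (S := S) hc hSm (ae_restrict_mem hSm) isOpen_univ
      (F := fun y l => f (x + l • y) * w (nsq y)) ?_ ?_
    · have := hf.continuous
      exact Continuous.continuousOn ((by fun_prop : Continuous fun p : (ι → ℂ) × ℂ =>
        f (x + p.2 • p.1)).mul (Complex.continuous_ofReal.comp (hwc.comp continuous_fst)))
    · intro y _
      exact (Differentiable.mul_const (hf.comp (by fun_prop)) _).differentiableOn
  -- rotation invariance: `h` is constant on the unit circle
  have hrot : ∀ l ∈ sphere (0 : ℂ) |1|, h l = h 1 := by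
    intro l hl
    have hl1 : ‖l‖ = 1 := by simpa using hl
    have hp : MeasurePreserving (fun y : ι → ℂ => fun i => l * y i) := by
      refine volume_preserving_pi (f := fun _ z => l * z) fun _ => ?_
      exact (rotation ⟨l, mem_sphere_zero_iff_norm.2 hl1⟩).measurePreserving
    have he : MeasurableEmbedding (fun y : ι → ℂ => fun i => l * y i) := by
      have hl0 : l ≠ 0 := by rintro rfl; simp at hl1
      exact (Homeomorph.smulOfNeZero (α := ι → ℂ) l hl0).measurableEmbedding
    have := hp.integral_comp he (fun y => f (x + y) * w (nsq y))
    simp only [hh, one_smul]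
    rw [← this]
    refine integral_congr_ae (Eventually.of_forall fun y => ?_)
    have : nsq (fun i => l * y i) = nsq y := by
      simp [nsq, Complex.normSq_eq_norm_sq, hl1]
    simp only [this]
    rfl
  have h1 : h 0 = h 1 := by
    rw [← Real.circleAverage_const_on_circle hrot]
    exact (DiffContOnCl.circleAverage (hd.mono (subset_univ _)).diffContOnCl).symm
  have h2 : h 1 = ∫ ζ, f ζ * w (nsq (ζ - x)) := by
    rw [← integral_add_left_eq_self (fun ζ => f ζ * (w (nsq (ζ - x)) : ℂ)) x]
    simp [hh]
  rw [← h2, ← h1, hh]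
  simp only [zero_smul, add_zero]
  rw [integral_const_mul, mul_comm]

end

/-! ### The Cauchy–Fantappiè formula for entire functions -/

section

variable {ι : Type*} [Fintype ι] [DecidableEq ι]

/-- The denominator of the Cauchy–Fantappiè kernel with section `s`. -/
def pair (s : ι → (ι → ℂ) → ℂ) (ζ x : ι → ℂ) : ℂ := ∑ l, s l ζ * (ζ l - x l)

/-- The Cauchy–Fantappiè kernel `det (dbar k (p j / u))` with `u = pair s ζ x`, the quotient rule being
written out with `A k j` in place of `dbar k (p j)` and `B k l` in place of `dbar k (s l)`. Recording
`A` and `B` separately makes it visible that the kernel is a rational function of `x`. -/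
noncomputable def kern (A B : ι → ι → (ι → ℂ) → ℂ) (p s : ι → (ι → ℂ) → ℂ) (ζ x : ι → ℂ) : ℂ :=
  (Matrix.of fun k j => (A k j ζ * pair s ζ x - p j ζ * pair (B k) ζ x) / pair s ζ x ^ 2).det

omit [DecidableEq ι] in
theorem contDiff_pair {s : ι → (ι → ℂ) → ℂ} (hs : ∀ j, ContDiff ℝ ∞ (s j)) (x : ι → ℂ) :
    ContDiff ℝ ∞ (fun ζ => pair s ζ x) := by
  unfold pair
  refine ContDiff.sum fun l _ => (hs l).mul ?_
  have : ContDiff ℝ ∞ (fun ζ : ι → ℂ => ζ l) := contDiff_apply ℝ ℂ l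
  exact this.sub contDiff_const

theorem dbar_pair {s : ι → (ι → ℂ) → ℂ} (hs : ∀ j, ContDiff ℝ ∞ (s j)) (x ζ : ι → ℂ) (k : ι) :
    dbar k (fun ζ => pair s ζ x) ζ = pair (fun l => dbar k (s l)) ζ x := by
  have hl : ∀ j, DifferentiableAt ℂ (fun z : ι → ℂ => z j - x j) ζ := fun j => by fun_prop
  have hsd : ∀ j, DifferentiableAt ℝ (s j) ζ := fun j => (hs j).differentiable (by simp) ζ
  unfold pair
  rw [dbar_sum fun l _ => (hsd l).fun_mul ((hl l).restrictScalars ℝ)]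
  refine Finset.sum_congr rfl fun l _ => ?_
  rw [dbar_mul (hsd l) ((hl l).restrictScalars ℝ), dbar_holo (hl l), mul_zero, add_zero]

theorem dbarDet_congr {G H : ι → (ι → ℂ) → ℂ} {ζ : ι → ℂ} (h : ∀ j, G j =ᶠ[𝓝 ζ] H j) :
    dbarDet G ζ = dbarDet H ζ := by
  rw [dbarDet, dbarDet]
  congr 1
  ext k j
  exact dbar_congr (h j)

/-- The Cauchy–Fantappiè formula for entire functions. The section `(1 - φ) s / pair s ζ x` vanishes
on the neighbourhood `V` of `x`, and it pairs to `1` with `ζ - x` outside the support of the cutoff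
`φ`, so that its determinant lives on `tsupport φ ∩ Vᶜ`. -/
theorem kernel_entire [Nonempty ι] {f : (ι → ℂ) → ℂ} (hf : Differentiable ℂ f) {V : Set (ι → ℂ)}
    (hV : IsOpen V) {φ : (ι → ℂ) → ℂ} (hφ : ContDiff ℝ ∞ φ) (hφ1 : ∀ ζ ∈ V, φ ζ = 1)
    (hφc : HasCompactSupport φ) {s : ι → (ι → ℂ) → ℂ} (hs : ∀ j, ContDiff ℝ ∞ (s j))
    {x : ι → ℂ} {δ : ℝ} (hδ : 0 < δ) (hx : ∀ ζ, nsq (ζ - x) ≤ δ → ζ ∈ V)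
    (hu : ∀ ζ ∉ V, pair s ζ x ≠ 0) :
    ∫ ζ in tsupport φ ∩ Vᶜ, f ζ * kern (fun k j => dbar k (fun z => (1 - φ z) * s j z))
      (fun k l => dbar k (s l)) (fun j z => (1 - φ z) * s j z) s ζ x =
    ((∫ y : ι → ℂ, dens (Fintype.card ι) δ (nsq y) : ℝ) : ℂ) * f x := by
  have hxV : x ∈ V := hx x (by simp [nsq, hδ.le])
  have hpS : ∀ j, ContDiff ℝ ∞ (fun z => (1 - φ z) * s j z) := fun j =>
    (contDiff_const.sub hφ).mul (hs j)
  have hus := contDiff_pair hs x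
  -- the section `EB` vanishes near `x`; the section `EA` agrees with `loc δ x` near `x`
  set EB : ι → (ι → ℂ) → ℂ := fun j ζ => (1 - φ ζ) * s j ζ / pair s ζ x with hEB
  set EA : ι → (ι → ℂ) → ℂ := fun j ζ => EB j ζ + φ ζ * loc δ x j ζ with hEA
  have hB0 : ∀ ζ ∈ V, ∀ j, EB j ζ = 0 := fun ζ hζ j => by simp [hEB, hφ1 ζ hζ]
  have hBV : ∀ ζ ∈ V, ∀ j, EB j =ᶠ[𝓝 ζ] fun _ => 0 := fun ζ hζ j => by
    filter_upwards [hV.mem_nhds hζ] with z hz using hB0 z hz j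
  have hBs : ∀ j, ContDiff ℝ ∞ (EB j) := by
    intro j
    rw [contDiff_iff_contDiffAt]
    intro ζ
    by_cases hζ : ζ ∈ V
    · exact contDiffAt_const.congr_of_eventuallyEq (hBV ζ hζ j)
    · simp only [hEB, div_eq_mul_inv]
      exact (hpS j).contDiffAt.mul (ContDiffAt.inv hus.contDiffAt (hu ζ hζ))
  have hφl : ∀ j, ContDiff ℝ ∞ (fun ζ => φ ζ * loc δ x j ζ) := fun j => hφ.mul (contDiff_loc hδ x j)
  have hAs : ∀ j, ContDiff ℝ ∞ (EA j) := fun j => (hBs j).add (hφl j)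
  have hBsum : ∀ ζ ∉ V, ∑ j, EB j ζ * (ζ j - x j) = 1 - φ ζ := by
    intro ζ hζ
    have h0 := hu ζ hζ
    have : ∀ j, EB j ζ * (ζ j - x j) = (1 - φ ζ) / pair s ζ x * (s j ζ * (ζ j - x j)) := fun j => by
      simp only [hEB]; ring
    rw [Finset.sum_congr rfl fun j _ => this j, ← Finset.mul_sum]
    change (1 - φ ζ) / pair s ζ x * pair s ζ x = _
    field_simp
  have hlsum : ∀ ζ, δ < nsq (ζ - x) → ∑ j, loc δ x j ζ * (ζ j - x j) = 1 := by
    intro ζ hζ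
    have h1 : ∑ j, loc δ x j ζ * (ζ j - x j) = ((nsq (ζ - x) * kap δ (nsq (ζ - x)) : ℝ) : ℂ) := by
      push_cast
      rw [ofReal_nsq, Finset.sum_mul]
      exact Finset.sum_congr rfl fun j _ => by simp only [loc, Pi.sub_apply]; ring
    rw [h1, kap_mul hδ, Real.smoothTransition.one_of_one_le]
    · simp
    · rw [le_sub_iff_add_le, le_div_iff₀ hδ]; linarith
  have hne : ∀ ζ, ζ ∉ V → ζ ≠ x := fun ζ hζ h => hζ (h ▸ hxV)
  have hA : dbarDet EA = fun ζ => (dens (Fintype.card ι) δ (nsq (ζ - x)) : ℂ) := by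
    ext ζ
    rcases le_or_gt (nsq (ζ - x)) δ with hζ | hζ
    · rw [← dbarDet_loc hδ]
      refine dbarDet_congr fun j => ?_
      filter_upwards [hV.mem_nhds (hx ζ hζ)] with z hz
      simp [hEA, hB0 z hz, hφ1 z hz]
    · rw [dens_zero _ hδ hζ, Complex.ofReal_zero]
      refine dbarDet_eq_zero (x := x) (c := 1) (fun j => (hAs j).differentiable (by simp) ζ) ?_ ?_
      · have ho : IsOpen {z : ι → ℂ | δ < nsq (z - x)} :=
          isOpen_lt continuous_const (continuous_nsq.comp (by fun_prop))
        filter_upwards [ho.mem_nhds hζ] with z hz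
        have e : ∑ j, EA j z * (z j - x j) = ∑ j, EB j z * (z j - x j) + φ z := by
          have := hlsum z hz
          simp only [hEA, add_mul, Finset.sum_add_distrib, mul_assoc]
          rw [← Finset.mul_sum, this, mul_one]
        rw [e]
        by_cases hzV : z ∈ V
        · simp [hB0 z hzV, hφ1 z hzV]
        · rw [hBsum z hzV]; ring
      · rintro rfl
        simp [nsq] at hζ; linarith
  have hBout : ∀ ζ ∉ tsupport φ, dbarDet EB ζ = 0 := by
    intro ζ hζ
    have hVt : V ⊆ tsupport φ := fun z hz => subset_tsupport _ (by simp [hφ1 z hz])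
    refine dbarDet_eq_zero (x := x) (c := 1) (fun j => (hBs j).differentiable (by simp) ζ) ?_
      (hne ζ fun h => hζ (hVt h))
    filter_upwards [(isClosed_tsupport φ).isOpen_compl.mem_nhds hζ] with z hz
    rw [hBsum z fun h => hz (hVt h), image_eq_zero_of_notMem_tsupport hz, sub_zero]
  have hBin : ∀ ζ ∈ V, dbarDet EB ζ = 0 := by
    intro ζ hζ
    rw [dbarDet_congr (hBV ζ hζ), dbarDet]
    have : (Matrix.of fun k j : ι => dbar k (fun _ => (0 : ℂ)) ζ) = 0 := by
      ext k j; simp [dbar_const]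
    rw [this, Matrix.det_zero]
  have hBk : ∀ ζ ∉ V, dbarDet EB ζ = kern (fun k j => dbar k (fun z => (1 - φ z) * s j z))
      (fun k l => dbar k (s l)) (fun j z => (1 - φ z) * s j z) s ζ x := by
    intro ζ hζ
    rw [dbarDet, kern]
    congr 1
    ext k j
    rw [Matrix.of_apply, Matrix.of_apply, dbar_div ((hpS j).differentiable (by simp) ζ)
      (hus.differentiable (by simp) ζ) (hu ζ hζ), dbar_pair hs]
  -- the density `dens (nsq y)` has compact support
  have hsm : ∀ y : ι → ℂ, y ∉ closedBall (0 : ι → ℂ) (1 + δ) → δ < nsq y := by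
    intro y hy
    rw [mem_closedBall_zero_iff, not_le] at hy
    have := norm_sq_le_nsq y
    nlinarith
  have hdc : HasCompactSupport fun y : ι → ℂ => dens (Fintype.card ι) δ (nsq y) :=
    HasCompactSupport.intro (isCompact_closedBall 0 (1 + δ)) fun y hy => dens_zero _ hδ (hsm y hy)
  have key := integral_dbarDet_congr hf hAs hBs (fun j => by
      have : EA j - EB j = fun ζ => φ ζ * loc δ x j ζ := by ext ζ; simp [hEA]
      rw [this]; exact hφc.mul_right) (by
      rw [hA]
      refine HasCompactSupport.intro (isCompact_closedBall x (1 + δ)) fun y hy => ?_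
      rw [dens_zero _ hδ (hsm (y - x) (by simpa [dist_eq_norm] using hy)), Complex.ofReal_zero])
    (HasCompactSupport.intro hφc hBout)
  have hm : MeasurableSet (tsupport φ ∩ Vᶜ) :=
    (isClosed_tsupport φ).measurableSet.inter hV.measurableSet.compl
  rw [← setIntegral_eq_integral_of_forall_compl_eq_zero (s := tsupport φ ∩ Vᶜ)
    (f := fun ζ => f ζ * dbarDet EB ζ) (fun ζ hζ => ?_), hA, integral_radial hf
      (continuous_dens _ hδ) hdc, integral_complex_ofReal] at key
  · rw [key]
    refine setIntegral_congr_fun hm fun ζ hζ => ?_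
    simp only [hBk ζ hζ.2]
  · by_cases h1 : ζ ∈ V
    · rw [hBin ζ h1, mul_zero]
    · rw [hBout ζ fun h2 => hζ ⟨h2, h1⟩, mul_zero]

omit [DecidableEq ι] in
/-- A smooth choice of complex hyperplanes separating the points of a closed set from a compact
convex set. -/
theorem exists_separating {K C : Set (ι → ℂ)} (hK : IsCompact K) (hKc : Convex ℝ K)
    (hC : IsClosed C) (hd : Disjoint K C) :
    ∃ s : ι → (ι → ℂ) → ℂ, (∀ j, ContDiff ℝ ∞ (s j)) ∧
      ∀ ζ ∈ C, ∀ x ∈ K, 0 < (pair s ζ x).re := by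
  classical
  set t : (ι → ℂ) → Set (ι → ℂ) := fun ζ =>
    {v | ζ ∈ C → ∀ x ∈ K, 0 < (∑ l, v l * (ζ l - x l)).re} with ht
  have htc : ∀ ζ, Convex ℝ (t ζ) := by
    intro ζ v hv w hw a b ha hb hab hζ x hx
    have h1 := hv hζ x hx
    have h2 := hw hζ x hx
    have : (∑ l, (a • v + b • w) l * (ζ l - x l)).re =
        a * (∑ l, v l * (ζ l - x l)).re + b * (∑ l, w l * (ζ l - x l)).re := by
      rw [← Complex.re_ofReal_mul, ← Complex.re_ofReal_mul, ← Complex.add_re, Finset.mul_sum,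
        Finset.mul_sum, ← Finset.sum_add_distrib]
      congr 1
      refine Finset.sum_congr rfl fun l _ => ?_
      simp only [Pi.add_apply, Pi.smul_apply, Complex.real_smul]
      ring
    rw [this]
    rcases ha.eq_or_lt with rfl | ha
    · simp_all
    · exact add_pos_of_pos_of_nonneg (mul_pos ha h1) (mul_nonneg hb h2.le)
  obtain ⟨g, hg⟩ := exists_contMDiffMap_forall_mem_convex_of_local_const (n := (⊤ : ℕ∞))
    (modelWithCornersSelf ℝ (ι → ℂ)) htc (by
    intro ζ
    by_cases hζ : ζ ∈ C
    · obtain ⟨F, a, ha, hF⟩ := RCLike.geometric_hahn_banach_closed_point (𝕜 := ℂ) hKc hK.isClosed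
        (fun h => hd.le_bot ⟨h, hζ⟩ : ζ ∉ K)
      have hFe : ∀ y, F y = ∑ l, F (Pi.single l 1) * y l := by
        intro y
        conv_lhs => rw [pi_eq_sum_univ' y]
        simp [mul_comm]
      refine ⟨fun l => F (Pi.single l 1), ?_⟩
      have ho : IsOpen {z : ι → ℂ | a < (F z).re} := isOpen_lt continuous_const (by fun_prop)
      filter_upwards [ho.mem_nhds hF] with z hz _ x hx
      have := ha x hx
      have e : ∑ l, F (Pi.single l 1) * (z l - x l) = F (z - x) := (hFe (z - x)).symm
      rw [e, map_sub, Complex.sub_re]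
      have hz' : a < (F z).re := hz
      change (F x).re < a at this
      linarith
    · refine ⟨0, ?_⟩
      filter_upwards [hC.isOpen_compl.mem_nhds hζ] with z hz hz' using absurd hz' hz)
  have hgs : ContDiff ℝ ∞ g := g.contMDiff.contDiff
  exact ⟨fun j ζ => g ζ j, fun j => (contDiff_apply ℝ ℂ j).comp hgs, fun ζ hζ x hx => hg ζ hζ x hx⟩

end

/-! ### Runge approximation on compact convex sets -/

section

/-- A holomorphic map of a disc of radius `R > 1` into a thin neighbourhood of the segment `[0, 1]`
which fixes `0` and `1`. -/
theorem exists_thin_map {ε : ℝ} (hε : 0 < ε) : ∃ R : ℝ, 1 < R ∧ ∃ ψ : ℂ → ℂ,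
    (∀ w ∈ closedBall (0 : ℂ) R, DifferentiableAt ℂ ψ w) ∧ ψ 0 = 0 ∧ ψ 1 = 1 ∧
    ∀ w ∈ closedBall (0 : ℂ) R, ∃ t ∈ Icc (0 : ℝ) 1, ‖ψ w - t‖ ≤ ε := by
  -- `1 - a = exp (-L)` and `1 - a R = exp (-(1 + η) L)`
  set η : ℝ := ε / 2 with hη
  have hη0 : 0 < η := by positivity
  set L : ℝ := (Real.pi + Real.log 2) / η with hL
  have hl2 : 0 < Real.log 2 := Real.log_pos (by norm_num)
  have hL0 : 0 < L := div_pos (by positivity) hη0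
  have hLη : L * η = Real.pi + Real.log 2 := by rw [hL]; field_simp
  set a : ℝ := 1 - Real.exp (-L) with ha
  set b : ℝ := 1 - Real.exp (-((1 + η) * L)) with hb
  have ha0 : 0 < a := by rw [ha]; simpa using hL0
  have hab : a < b := by
    rw [ha, hb]
    have : Real.exp (-((1 + η) * L)) < Real.exp (-L) := by
      rw [Real.exp_lt_exp]; nlinarith [mul_pos hη0 hL0]
    linarith
  have hb1 : b < 1 := by rw [hb]; linarith [Real.exp_pos (-((1 + η) * L))]
  have hw : ∀ w ∈ closedBall (0 : ℂ) (b / a), ‖(a : ℂ) * w‖ ≤ b := by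
    intro w hw
    rw [mem_closedBall_zero_iff, le_div_iff₀ ha0] at hw
    rw [norm_mul, Complex.norm_real, Real.norm_of_nonneg ha0.le]; linarith
  refine ⟨b / a, (one_lt_div ha0).2 hab, fun w => -Complex.log (1 - a * w) / L, ?_, by simp, ?_, ?_⟩
  · intro w hw'
    have : (1 : ℂ) - a * w ∈ Complex.slitPlane := by
      rw [sub_eq_add_neg]
      exact Complex.mem_slitPlane_of_norm_lt_one (by rw [norm_neg]; linarith [hw w hw'])
    have h1 : DifferentiableAt ℂ (fun w : ℂ => 1 - a * w) w := by fun_prop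
    exact (h1.clog this).fun_neg.div_const _
  · have : (1 : ℂ) - a * 1 = ((Real.exp (-L) : ℝ) : ℂ) := by rw [ha]; push_cast; ring
    simp only [this]
    rw [← Complex.ofReal_log (Real.exp_pos _).le, Real.log_exp]
    have : (L : ℂ) ≠ 0 := by exact_mod_cast hL0.ne'
    push_cast; field_simp
  · intro w hw'
    have hn := hw w hw'
    set z : ℂ := 1 - a * w with hz
    have hz1 : 1 - b ≤ ‖z‖ := by
      have := norm_sub_norm_le (1 : ℂ) (a * w)
      rw [norm_one] at this; linarith
    have hz2 : ‖z‖ ≤ 2 := by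
      have := norm_sub_le (1 : ℂ) (a * w)
      rw [norm_one] at this; linarith
    have hz0 : 0 < ‖z‖ := by linarith
    have hlo : -((1 + η) * L) ≤ Real.log ‖z‖ := by
      rw [Real.le_log_iff_exp_le hz0]; linarith
    have hhi : Real.log ‖z‖ ≤ Real.log 2 := Real.log_le_log hz0 hz2
    have hre : (-Complex.log z / L).re = -Real.log ‖z‖ / L := by
      rw [Complex.div_ofReal_re, Complex.neg_re, Complex.log_re]
    have him : |(-Complex.log z / L).im| ≤ η := by
      rw [Complex.div_ofReal_im, Complex.neg_im, Complex.log_im, abs_div, abs_neg, abs_of_pos hL0,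
        div_le_iff₀ hL0]
      have := Complex.abs_arg_le_pi z
      linarith
    have h1 : -η ≤ -Real.log ‖z‖ / L := by rw [le_div_iff₀ hL0]; linarith [Real.pi_pos]
    have h2 : -Real.log ‖z‖ / L ≤ 1 + η := by rw [div_le_iff₀ hL0]; linarith
    refine ⟨max 0 (min 1 (-Real.log ‖z‖ / L)), ⟨le_max_left _ _, max_le zero_le_one
      (min_le_left _ _)⟩, (Complex.norm_le_abs_re_add_abs_im _).trans ?_⟩
    rw [Complex.sub_re, Complex.sub_im, Complex.ofReal_re, Complex.ofReal_im, sub_zero, hre]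
    have : |(-Real.log ‖z‖ / L) - max 0 (min 1 (-Real.log ‖z‖ / L))| ≤ η := by
      generalize -Real.log ‖z‖ / L = r at h1 h2
      rw [abs_le]
      rcases le_total 1 r with h | h
      · rw [min_eq_left h, max_eq_right zero_le_one]; constructor <;> linarith
      · rw [min_eq_right h]
        rcases le_total 0 r with h' | h'
        · rw [max_eq_right h']; constructor <;> linarith
        · rw [max_eq_left h']; constructor <;> linarith
    linarith

variable {E : Type*} [NormedAddCommGroup E] [NormedSpace ℂ E] [FiniteDimensional ℂ E]

/-- Runge approximation: a function holomorphic near a compact convex set is a uniform limit of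
entire functions there. The approximants are the Taylor polynomials in `w`, evaluated at `w = 1`, of
`f (c + ψ w • (x - c))`, where `ψ` is the map of `exists_thin_map`. -/
theorem runge {U K : Set E} (hU : IsOpen U) (hK : IsCompact K) (hKc : Convex ℝ K) (hKU : K ⊆ U)
    {f : E → ℂ} (hf : DifferentiableOn ℂ f U) {ε : ℝ} (hε : 0 < ε) :
    ∃ g : E → ℂ, Differentiable ℂ g ∧ ∀ x ∈ K, ‖f x - g x‖ ≤ ε := by
  rcases K.eq_empty_or_nonempty with rfl | ⟨c, hc⟩
  · exact ⟨fun _ => 0, by fun_prop, by simp⟩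
  obtain ⟨η, hη, hηU⟩ := hK.exists_cthickening_subset_open hU hKU
  obtain ⟨M, hM⟩ := (hK.image (f := fun x => x - c) (by fun_prop)).isBounded.exists_norm_le
  have hM' : ∀ x ∈ K, ‖x - c‖ ≤ M := fun x hx => hM _ ⟨x, hx, rfl⟩
  have hM0 : 0 ≤ M := (norm_nonneg _).trans (hM' c hc)
  obtain ⟨R, hR, ψ, hψ, hψ0, hψ1, hψt⟩ := exists_thin_map (ε := η / (M + 1)) (by positivity)
  have hmem : ∀ x ∈ K, ∀ w ∈ closedBall (0 : ℂ) R, c + ψ w • (x - c) ∈ U := by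
    intro x hx w hw
    obtain ⟨t, ht, htw⟩ := hψt w hw
    refine hηU (mem_cthickening_of_dist_le _ (c + t • (x - c)) _ _
      (hKc.add_smul_sub_mem hc hx ht) ?_)
    rw [dist_eq_norm, show c + ψ w • (x - c) - (c + t • (x - c)) = (ψ w - t) • (x - c) by
      rw [sub_smul, Complex.coe_smul]; abel, norm_smul]
    calc _ ≤ η / (M + 1) * M := by gcongr; exact hM' x hx
      _ ≤ η := by rw [div_mul_eq_mul_div, div_le_iff₀ (by positivity)]; nlinarith
  set F : E → ℂ → ℂ := fun x w => f (c + ψ w • (x - c)) with hF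
  have hFd : ∀ x ∈ K, ∀ w ∈ closedBall (0 : ℂ) R, DifferentiableAt ℂ (F x) w := by
    intro x hx w hw
    have h1 := hf.differentiableAt (hU.mem_nhds (hmem x hx w hw))
    exact DifferentiableAt.comp (g := f) (f := fun w => c + ψ w • (x - c)) w h1
      (((hψ w hw).smul_const _).const_add _)
  have hψc : ContinuousOn ψ (closedBall 0 R) := fun w hw => (hψ w hw).continuousAt.continuousWithinAt
  have hcont : ContinuousOn (fun p : E × ℂ => F p.1 p.2) (K ×ˢ closedBall 0 R) := by
    refine hf.continuousOn.comp ?_ fun p hp => hmem p.1 hp.1 p.2 hp.2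
    exact continuousOn_const.add ((hψc.comp continuousOn_snd fun p hp => hp.2).smul
      (by fun_prop))
  obtain ⟨C, hC⟩ := (hK.prod (isCompact_closedBall (0 : ℂ) R)).exists_bound_of_continuousOn hcont
  have hR0 : 0 < R := by linarith
  -- the Taylor coefficients are entire functions of `x`
  have hcoef : ∀ n : ℕ, Differentiable ℂ fun x => iteratedDeriv n (F x) 0 := by
    intro n x₀
    obtain ⟨η', hη', hb⟩ := Metric.isOpen_iff.1 hU c (hKU hc)
    obtain ⟨ρ, hρ, hρψ⟩ := Metric.continuousAt_iff.1
      (hψ 0 (mem_closedBall_self hR0.le)).continuousAt (η' / (‖x₀ - c‖ + 1)) (by positivity)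
    set r : ℝ := min (ρ / 2) R with hr
    have hr0 : 0 < r := lt_min (by positivity) hR0
    have hin : ∀ w ∈ closedBall (0 : ℂ) r, ∀ x ∈ ball x₀ 1, c + ψ w • (x - c) ∈ U := by
      intro w hw x hx
      refine hb ?_
      rw [mem_ball, dist_eq_norm, add_sub_cancel_left, norm_smul]
      have h1 : ‖ψ w‖ < η' / (‖x₀ - c‖ + 1) := by
        have := hρψ (x := w) (by
          have := mem_closedBall.1 hw
          linarith [min_le_left (ρ / 2) R])
        rwa [hψ0, dist_zero_right] at this
      have h2 : ‖x - c‖ ≤ ‖x₀ - c‖ + 1 := by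
        have := norm_add_le (x - x₀) (x₀ - c)
        rw [sub_add_sub_cancel] at this
        have h3 := (mem_ball_iff_norm.1 hx)
        linarith
      calc _ ≤ ‖ψ w‖ * (‖x₀ - c‖ + 1) := by gcongr
        _ < η' / (‖x₀ - c‖ + 1) * (‖x₀ - c‖ + 1) := by gcongr
        _ = η' := by field_simp
    have hwR : ∀ w ∈ closedBall (0 : ℂ) r, w ∈ closedBall (0 : ℂ) R := fun w hw =>
      closedBall_subset_closedBall (min_le_right _ _) hw
    have hdc : ∀ x ∈ ball x₀ 1, DiffContOnCl ℂ (F x) (ball 0 r) := by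
      intro x hx
      refine DifferentiableOn.diffContOnCl fun w hw => ?_
      rw [closure_ball _ hr0.ne'] at hw
      have h1 := hf.differentiableAt (hU.mem_nhds (hin w hw x hx))
      exact (DifferentiableAt.comp (g := f) (f := fun w => c + ψ w • (x - c)) w h1
        (((hψ w (hwR w hw)).smul_const _).const_add _)).differentiableWithinAt
    have hd := differentiableOn_circleIntegral_param (c := 0) (R := r) (B := ball x₀ 1) hr0.le
      isOpen_ball (F := fun w x => (1 / (w - 0) ^ (n + 1)) • F x w) (by
        have hpow : ContinuousOn (fun p : ℂ × E => 1 / (p.1 - 0) ^ (n + 1))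
            (sphere 0 r ×ˢ ball x₀ 1) := by
          refine ContinuousOn.div continuousOn_const (Continuous.continuousOn (by fun_prop)) ?_
          rintro p ⟨hp, -⟩
          have : p.1 ≠ 0 := by
            intro h
            have : ‖p.1‖ = r := by simpa using hp
            rw [h, norm_zero] at this; linarith
          simpa using this
        refine hpow.smul ?_
        · refine hf.continuousOn.comp ?_ fun p hp => hin p.1 (sphere_subset_closedBall hp.1) p.2 hp.2
          exact continuousOn_const.add ((hψc.comp continuousOn_fst fun p hp =>
            hwR _ (sphere_subset_closedBall hp.1)).smul (by fun_prop))) (by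
        intro w hw
        refine DifferentiableOn.fun_const_smul (f := fun x => F x w) ?_ _
        refine DifferentiableOn.comp (g := f) (f := fun x => c + ψ w • (x - c)) (t := U) hf
          (by fun_prop) fun x hx => hin w (sphere_subset_closedBall hw) x hx)
    have hx₀ : ball x₀ 1 ∈ 𝓝 x₀ := ball_mem_nhds _ one_pos
    refine ((hd.differentiableAt hx₀).const_smul
      (2 * Real.pi * Complex.I / n.factorial : ℂ)⁻¹).congr_of_eventuallyEq ?_
    filter_upwards [hx₀] with x hx
    rw [Pi.smul_apply, (hdc x hx).circleIntegral_one_div_sub_center_pow_smul hr0 n, smul_smul,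
      inv_mul_cancel₀, one_smul]
    exact div_ne_zero Complex.two_pi_I_ne_zero (Nat.cast_ne_zero.2 n.factorial_ne_zero)
  have hsum : ∀ x ∈ K, HasSum (fun n : ℕ => (n.factorial : ℂ)⁻¹ • iteratedDeriv n (F x) 0) (f x) := by
    intro x hx
    have := Complex.hasSum_taylorSeries_on_ball (f := F x) (c := 0) (r := R) (z := 1)
      (fun w hw => (hFd x hx w (ball_subset_closedBall hw)).differentiableWithinAt) (by simpa using hR)
    simpa [hF, hψ1] using this
  have hterm : ∀ x ∈ K, ∀ n : ℕ, ‖(n.factorial : ℂ)⁻¹ • iteratedDeriv n (F x) 0‖ ≤ C * R⁻¹ ^ n := by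
    intro x hx n
    have h1 : DiffContOnCl ℂ (F x) (ball 0 R) := by
      refine DifferentiableOn.diffContOnCl fun w hw => ?_
      rw [closure_ball _ hR0.ne'] at hw
      exact (hFd x hx w hw).differentiableWithinAt
    have := Complex.norm_iteratedDeriv_le_of_forall_mem_sphere_norm_le n hR0 h1
      fun z hz => hC (x, z) ⟨hx, sphere_subset_closedBall hz⟩
    rw [norm_smul, norm_inv, Complex.norm_natCast]
    have hn : (0 : ℝ) < n.factorial := by exact_mod_cast n.factorial_pos
    rw [inv_mul_le_iff₀ hn]
    refine this.trans (le_of_eq ?_)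
    rw [inv_pow]; ring
  have hlim : Tendsto (fun N : ℕ => C * R⁻¹ ^ N / (1 - R⁻¹)) atTop (𝓝 0) := by
    have := ((tendsto_pow_atTop_nhds_zero_of_lt_one (inv_nonneg.2 hR0.le)
      (inv_lt_one_of_one_lt₀ hR)).const_mul C).div_const (1 - R⁻¹)
    simpa using this
  obtain ⟨N, hN⟩ := (hlim.eventually_le_const hε).exists
  refine ⟨fun x => ∑ n ∈ Finset.range N, (n.factorial : ℂ)⁻¹ • iteratedDeriv n (F x) 0, ?_, ?_⟩
  · exact Differentiable.fun_sum fun n _ => (hcoef n).fun_const_smul _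
  · intro x hx
    rw [norm_sub_rev]
    exact (norm_sub_le_of_geometric_bound_of_hasSum (inv_lt_one_of_one_lt₀ hR) (hterm x hx)
      (hsum x hx) N).trans hN

end

/-! ### The Cauchy–Fantappiè formula on compact convex sets -/

section

variable {ι : Type*} [Fintype ι] [DecidableEq ι]

omit [DecidableEq ι] in
theorem continuous_pair {s : ι → (ι → ℂ) → ℂ} (hs : ∀ j, Continuous (s j)) :
    Continuous fun q : (ι → ℂ) × (ι → ℂ) => pair s q.1 q.2 := by
  unfold pair
  exact continuous_finsetSum _ fun l _ => ((hs l).comp continuous_fst).mul (by fun_prop)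

omit [DecidableEq ι] in
theorem differentiable_pair (s : ι → (ι → ℂ) → ℂ) (ζ : ι → ℂ) :
    Differentiable ℂ fun x => pair s ζ x := by
  unfold pair
  exact Differentiable.fun_sum fun l _ => Differentiable.const_mul (by fun_prop) _

variable {A B : ι → ι → (ι → ℂ) → ℂ} {p s : ι → (ι → ℂ) → ℂ}

theorem continuousOn_kern (hA : ∀ k j, Continuous (A k j)) (hB : ∀ k j, Continuous (B k j))
    (hp : ∀ j, Continuous (p j)) (hs : ∀ j, Continuous (s j)) :
    ContinuousOn (fun q : (ι → ℂ) × (ι → ℂ) => kern A B p s q.1 q.2)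
      {q | pair s q.1 q.2 ≠ 0} := by
  have hc := continuous_pair hs
  simp only [kern, Matrix.det_apply]
  refine continuousOn_finsetSum _ fun σ _ => ContinuousOn.const_smul ?_ _
  refine continuousOn_finsetProd _ fun j _ => ?_
  simp only [Matrix.of_apply]
  refine ContinuousOn.div (Continuous.continuousOn ?_) (hc.pow 2).continuousOn
    fun q hq => pow_ne_zero 2 hq
  exact (((hA _ _).comp continuous_fst).mul hc).sub
    (((hp _).comp continuous_fst).mul (continuous_pair (hB _)))

theorem differentiableOn_kern (ζ : ι → ℂ) :
    DifferentiableOn ℂ (fun x => kern A B p s ζ x) {x | pair s ζ x ≠ 0} := by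
  simp only [kern, Matrix.det_apply]
  refine DifferentiableOn.fun_sum fun σ _ => DifferentiableOn.fun_const_smul ?_ _
  have h : ∀ k j, DifferentiableOn ℂ (fun x =>
      (A k j ζ * pair s ζ x - p j ζ * pair (B k) ζ x) / pair s ζ x ^ 2) {x | pair s ζ x ≠ 0} := by
    intro k j
    simp only [div_eq_mul_inv]
    refine DifferentiableOn.mul ?_ (DifferentiableOn.inv ?_ fun q hq => pow_ne_zero 2 hq)
    · exact (((differentiable_pair s ζ).const_mul _).sub
        ((differentiable_pair (B _) ζ).const_mul _)).differentiableOn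
    · exact ((differentiable_pair s ζ).pow 2).differentiableOn
  exact fun x hx => (HasFDerivWithinAt.finsetProd fun j _ =>
    (h (σ j) j x hx).hasFDerivWithinAt).differentiableWithinAt

/-- The Cauchy–Fantappiè formula on a compact convex set for functions holomorphic near it, deduced
from the case of entire functions by Runge approximation on a slightly larger convex set. -/
theorem exists_kernel [Nonempty ι] {U K : Set (ι → ℂ)} (hU : IsOpen U) (hK : IsCompact K)
    (hKc : Convex ℝ K) (hKU : K ⊆ U) {f : (ι → ℂ) → ℂ} (hf : DifferentiableOn ℂ f U) :
    ∃ (S : Set (ι → ℂ)) (A B : ι → ι → (ι → ℂ) → ℂ) (p s : ι → (ι → ℂ) → ℂ) (c : ℂ),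
      IsCompact S ∧ S ⊆ U ∧ (∀ k j, Continuous (A k j)) ∧ (∀ k j, Continuous (B k j)) ∧
      (∀ j, Continuous (p j)) ∧ (∀ j, Continuous (s j)) ∧ c ≠ 0 ∧
      (∀ ζ ∈ S, ∀ x ∈ K, 0 < (pair s ζ x).re) ∧
      ∀ x ∈ K, ∫ ζ in S, f ζ * kern A B p s ζ x = c * f x := by
  obtain ⟨η, hη, hηU⟩ := hK.exists_cthickening_subset_open hU hKU
  obtain ⟨χ, hχs, -, hχ0, hχ1⟩ := exists_contMDiff_zero_iff_one_iff_of_isClosed (n := (⊤ : ℕ∞))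
    (modelWithCornersSelf ℝ (ι → ℂ)) (s := (thickening η K)ᶜ) (t := cthickening (η / 2) K)
    isOpen_thickening.isClosed_compl isClosed_cthickening (by
      rw [disjoint_compl_left_iff_subset]
      exact cthickening_subset_thickening' hη (by linarith) K)
  set V := thickening (η / 2) K with hV
  have hVo : IsOpen V := isOpen_thickening
  set φ : (ι → ℂ) → ℂ := fun ζ => (χ ζ : ℂ) with hφ
  have hφs : ContDiff ℝ ∞ φ := Complex.ofRealCLM.contDiff.comp hχs.contDiff
  have hφ1 : ∀ ζ ∈ V, φ ζ = 1 := fun ζ hζ => by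
    simp [hφ, (hχ1 ζ).1 (thickening_subset_cthickening _ _ hζ)]
  set K2 := cthickening η K with hK2
  have hK2c : IsCompact K2 := hK.cthickening
  have hts : tsupport φ ⊆ K2 := by
    refine closure_minimal (fun ζ hζ => ?_) isClosed_cthickening
    by_contra h
    exact hζ (by simp [hφ, (hχ0 ζ).1 fun h' => h (thickening_subset_cthickening _ _ h')])
  have hφc : HasCompactSupport φ := hK2c.of_isClosed_subset (isClosed_tsupport _) hts
  obtain ⟨s, hs, hsep⟩ := exists_separating hK hKc hVo.isClosed_compl
    (disjoint_compl_right_iff_subset.2 (self_subset_thickening (by positivity) K))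
  set δ : ℝ := (η / 4) ^ 2 with hδ
  have hδ0 : 0 < δ := by positivity
  have hxV : ∀ x ∈ K, ∀ ζ, nsq (ζ - x) ≤ δ → ζ ∈ V := by
    intro x hx ζ hζ
    refine mem_thickening_iff.2 ⟨x, hx, ?_⟩
    rw [dist_eq_norm]
    have := (norm_sq_le_nsq (ζ - x)).trans hζ
    have := abs_le_of_sq_le_sq this (by positivity)
    have h2 := le_abs_self ‖ζ - x‖
    linarith
  set S := tsupport φ ∩ Vᶜ with hS
  have hSc : IsCompact S := hφc.inter_right hVo.isClosed_compl
  have hpS : ∀ j, ContDiff ℝ ∞ (fun z => (1 - φ z) * s j z) := fun j =>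
    (contDiff_const.sub hφs).mul (hs j)
  have hA : ∀ k j, Continuous (dbar k (fun z => (1 - φ z) * s j z)) := fun k j =>
    (contDiff_dbar (hpS j)).continuous
  have hB : ∀ k l, Continuous (dbar k (s l)) := fun k j => (contDiff_dbar (hs j)).continuous
  -- the constant is the total mass of a nonnegative density
  have hc0 : 0 < ∫ y : ι → ℂ, dens (Fintype.card ι) δ (nsq y) := by
    obtain ⟨r, hr, hrd⟩ := exists_dens_pos (Fintype.card ι) hδ0
    obtain ⟨i⟩ := ‹Nonempty ι›
    refine Continuous.integral_pos_of_hasCompactSupport_nonneg_nonzero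
      (x := Pi.single i ((Real.sqrt r : ℝ) : ℂ))
      ((continuous_dens _ hδ0).comp continuous_nsq)
      (HasCompactSupport.intro (isCompact_closedBall 0 (1 + δ)) fun y hy => dens_zero _ hδ0 ?_)
      (fun y => dens_nonneg _ hδ0 _) ?_
    · rw [mem_closedBall_zero_iff, not_le] at hy
      have := norm_sq_le_nsq y
      nlinarith
    · have : nsq (Pi.single i ((Real.sqrt r : ℝ) : ℂ) : ι → ℂ) = r := by
        rw [nsq, Finset.sum_eq_single i]
        · simp [Complex.normSq_ofReal, Real.mul_self_sqrt hr.le]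
        · intro j _ hj; simp [hj]
        · simp
      rw [this]; exact hrd.ne'
  set c : ℂ := ((∫ y : ι → ℂ, dens (Fintype.card ι) δ (nsq y) : ℝ) : ℂ) with hc
  refine ⟨S, fun k j => dbar k (fun z => (1 - φ z) * s j z), fun k l => dbar k (s l),
    fun j z => (1 - φ z) * s j z, s, c, hSc, fun ζ hζ => hηU (hts hζ.1), hA, hB,
    fun j => (hpS j).continuous, fun j => (hs j).continuous, by
      rw [hc]; exact_mod_cast hc0.ne', fun ζ hζ => hsep ζ hζ.2, fun x hx => ?_⟩
  have hux : ∀ ζ ∉ V, pair s ζ x ≠ 0 := fun ζ hζ h => by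
    have := hsep ζ hζ x hx
    rw [h] at this; simp at this
  set k : (ι → ℂ) → ℂ := fun ζ => kern (fun k j => dbar k (fun z => (1 - φ z) * s j z))
    (fun k l => dbar k (s l)) (fun j z => (1 - φ z) * s j z) s ζ x with hk
  have hkc : ContinuousOn k S :=
    (continuousOn_kern hA hB (fun j => (hpS j).continuous) fun j => (hs j).continuous).comp
      (f := fun ζ => (ζ, x)) (by fun_prop) fun ζ hζ => hux ζ hζ.2
  have hki : IntegrableOn k S := hkc.integrableOn_compact hSc
  have hfk : IntegrableOn (fun ζ => f ζ * k ζ) S :=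
    ((hf.continuousOn.mono fun ζ hζ => hηU (hts hζ.1)).mul hkc).integrableOn_compact hSc
  rw [← sub_eq_zero, ← norm_le_zero_iff]
  refine le_of_forall_pos_le_add fun ε hε => ?_
  set D : ℝ := ‖c‖ + ∫ ζ in S, ‖k ζ‖ with hD
  have hD0 : 0 ≤ D := add_nonneg (norm_nonneg _) (integral_nonneg fun _ => norm_nonneg _)
  obtain ⟨g, hg, hfg⟩ := runge hU hK2c (hKc.cthickening η) hηU hf
    (ε := ε / (D + 1)) (by positivity)
  have hgk : ∫ ζ in S, g ζ * k ζ = c * g x := kernel_entire hg hVo hφs hφ1 hφc hs hδ0 (hxV x hx) hux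
  have hgi : IntegrableOn (fun ζ => g ζ * k ζ) S :=
    (hg.continuous.continuousOn.mul hkc).integrableOn_compact hSc
  have e : (∫ ζ in S, f ζ * k ζ) - c * f x = (∫ ζ in S, (f ζ - g ζ) * k ζ) - c * (f x - g x) := by
    have : ∫ ζ in S, (f ζ - g ζ) * k ζ = (∫ ζ in S, f ζ * k ζ) - ∫ ζ in S, g ζ * k ζ := by
      rw [← integral_sub hfk hgi]
      exact integral_congr_ae (Eventually.of_forall fun ζ => by simp only [sub_mul])
    rw [this, hgk]; ring
  have h1 : ‖∫ ζ in S, (f ζ - g ζ) * k ζ‖ ≤ ∫ ζ in S, ε / (D + 1) * ‖k ζ‖ := by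
    refine norm_integral_le_of_norm_le (hki.norm.const_mul _) ?_
    filter_upwards [ae_restrict_mem hSc.measurableSet] with ζ hζ
    rw [norm_mul]
    gcongr
    exact hfg ζ (hts hζ.1)
  rw [integral_const_mul] at h1
  have h2 : ‖c * (f x - g x)‖ ≤ ‖c‖ * (ε / (D + 1)) := by
    rw [norm_mul]
    gcongr
    exact hfg x (self_subset_cthickening K hx)
  change ‖(∫ ζ in S, f ζ * k ζ) - c * f x‖ ≤ _
  rw [e, zero_add]
  calc _ ≤ ε / (D + 1) * (∫ ζ in S, ‖k ζ‖) + ‖c‖ * (ε / (D + 1)) :=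
        (norm_sub_le _ _).trans (add_le_add h1 h2)
    _ = ε * (D / (D + 1)) := by rw [hD]; ring
    _ ≤ ε * 1 := by gcongr; rw [div_le_one (by positivity)]; linarith
    _ = ε := mul_one ε

end

/-! ### Antiderivatives near compact convex sets -/

section

variable {ι : Type*} [Fintype ι] [DecidableEq ι]

/-- The affine map that contracts the `i`-th coordinate towards `a` by the factor `t`. -/
def contract (i : ι) (a : ℂ) (t : ℝ) (x : ι → ℂ) : ι → ℂ :=
  x + ((t - 1 : ℂ) * (x i - a)) • Pi.single i 1

theorem hasFDerivAt_contract (i : ι) (a : ℂ) (t : ℝ) (x : ι → ℂ) :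
    HasFDerivAt (contract i a t) (ContinuousLinearMap.id ℂ (ι → ℂ) +
      ((t - 1 : ℂ) • ContinuousLinearMap.proj (R := ℂ) (φ := fun _ : ι => ℂ) i).smulRight
        (Pi.single i 1 : ι → ℂ)) x := by
  unfold contract
  refine (hasFDerivAt_id x).fun_add (HasFDerivAt.smul_const ?_ _)
  exact ((hasFDerivAt_apply i x).sub_const a).const_mul _

theorem fderiv_contract_mul {k : (ι → ℂ) → ℂ} (i : ι) (a : ℂ) (t : ℝ) (x : ι → ℂ)
    (hk : DifferentiableAt ℂ k (contract i a t x)) :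
    DifferentiableAt ℂ (fun x => (x i - a) * k (contract i a t x)) x ∧
    fderiv ℂ (fun x => (x i - a) * k (contract i a t x)) x (Pi.single i 1) =
      k (contract i a t x) + (x i - a) * (t * fderiv ℂ k (contract i a t x) (Pi.single i 1)) := by
  have h := ((hasFDerivAt_apply (𝕜 := ℂ) i x).sub_const a).mul
    (HasFDerivAt.comp x hk.hasFDerivAt (hasFDerivAt_contract i a t x))
  have h' : HasFDerivAt (fun x => (x i - a) * k (contract i a t x)) _ x := h
  refine ⟨h'.differentiableAt, ?_⟩
  rw [h'.fderiv]
  simp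
  ring

theorem hasDerivAt_contract {k : (ι → ℂ) → ℂ} (i : ι) (a : ℂ) (t : ℝ) (x : ι → ℂ)
    (hk : DifferentiableAt ℂ k (contract i a t x)) :
    HasDerivAt (fun t : ℝ => (t : ℂ) * k (contract i a t x)) (k (contract i a t x) +
      (x i - a) * (t * fderiv ℂ k (contract i a t x) (Pi.single i 1))) t := by
  have h1 : HasDerivAt (fun t : ℂ => x + ((t - 1 : ℂ) * (x i - a)) • (Pi.single i 1 : ι → ℂ))
      ((1 * (x i - a)) • (Pi.single i 1 : ι → ℂ)) (t : ℂ) := by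
    refine HasDerivAt.const_add _ (HasDerivAt.smul_const ?_ _)
    exact ((hasDerivAt_id (t : ℂ)).sub_const 1).mul_const _
  have h2 := HasFDerivAt.comp_hasDerivAt (t : ℂ) (l := k) hk.hasFDerivAt h1
  have h3 := ((hasDerivAt_id (t : ℂ)).mul h2).comp_ofReal
  refine h3.congr_deriv ?_
  simp only [id, map_smul, one_mul, Function.comp, smul_eq_mul]
  change k (contract i a t x) + t * ((x i - a) * fderiv ℂ k (contract i a t x) (Pi.single i 1)) = _
  ring

/-- On the interior of a compact convex set every partial derivative is surjective. In the
Cauchy–Fantappiè formula the kernel at `ζ` is integrated along the segment from the point whose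
`i`-th coordinate is `-T * conj (s i ζ)`; for large `T` that segment avoids the singular hyperplane,
because moving towards its starting point changes `Re (pair s ζ x)` by a multiple of
`Re (s i ζ * x i) + T * |s i ζ|² ≥ -|x i|² / (4 T)`. -/
theorem antideriv_compact (i : ι) {U K : Set (ι → ℂ)} (hU : IsOpen U) (hK : IsCompact K)
    (hKc : Convex ℝ K) (hKU : K ⊆ U) {f : (ι → ℂ) → ℂ} (hf : DifferentiableOn ℂ f U) :
    ∃ θ : (ι → ℂ) → ℂ, DifferentiableOn ℂ θ (interior K) ∧
      ∀ x ∈ interior K, fderiv ℂ θ x (Pi.single i 1) = f x := by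
  have : Nonempty ι := ⟨i⟩
  obtain ⟨S, A, B, p, s, c, hS, hSU, hA, hB, hp, hs, hc, hpos, hker⟩ :=
    exists_kernel hU hK hKc hKU hf
  obtain ⟨d, hd, hdu⟩ : ∃ d : ℝ, 0 < d ∧ ∀ ζ ∈ S, ∀ x ∈ K, d ≤ (pair s ζ x).re := by
    have hcont : Continuous fun q : (ι → ℂ) × (ι → ℂ) => (pair s q.1 q.2).re :=
      Complex.continuous_re.comp (continuous_pair hs)
    rcases (S ×ˢ K).eq_empty_or_nonempty with h | h
    · exact ⟨1, one_pos, fun ζ hζ x hx => absurd (h ▸ mk_mem_prod hζ hx) (notMem_empty _)⟩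
    · obtain ⟨q, hq, hmin⟩ := (hS.prod hK).exists_isMinOn h hcont.continuousOn
      exact ⟨_, hpos _ hq.1 _ hq.2, fun ζ hζ x hx => hmin (mk_mem_prod hζ hx)⟩
  obtain ⟨M, hM⟩ := hK.isBounded.exists_norm_le
  set T : ℝ := (M ^ 2 + 1) / d with hT
  have hT0 : 0 < T := by positivity
  have hTd : T * d = M ^ 2 + 1 := by rw [hT]; field_simp
  set a : (ι → ℂ) → ℂ := fun ζ => -T * (starRingEnd ℂ) (s i ζ) with ha
  have hac : Continuous a := continuous_const.mul (Complex.continuous_conj.comp (hs i))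
  have hne : ∀ ζ ∈ S, ∀ x ∈ K, ∀ t ∈ Icc (0 : ℝ) 1, pair s ζ (contract i (a ζ) t x) ≠ 0 := by
    intro ζ hζ x hx t ht h0
    have e : pair s ζ (contract i (a ζ) t x) =
        pair s ζ x + ((1 - t : ℝ) : ℂ) * (s i ζ * (x i - a ζ)) := by
      simp only [pair, contract, Pi.add_apply, Pi.smul_apply, smul_eq_mul]
      have : ∀ l, s l ζ * (ζ l - (x l + (t - 1) * (x i - a ζ) * (Pi.single i 1 : ι → ℂ) l)) =
          s l ζ * (ζ l - x l) + (if l = i then ((1 - t : ℝ) : ℂ) * (s i ζ * (x i - a ζ)) else 0) := by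
        intro l
        rcases eq_or_ne l i with rfl | h
        · simp; ring
        · simp [h]
      rw [Finset.sum_congr rfl fun l _ => this l, Finset.sum_add_distrib]
      simp
    have h1 := hdu ζ hζ x hx
    have h2 : (pair s ζ (contract i (a ζ) t x)).re =
        (pair s ζ x).re + (1 - t) * ((s i ζ * x i).re + T * ‖s i ζ‖ ^ 2) := by
      have h3 : s i ζ * (x i - a ζ) = s i ζ * x i + ((T * ‖s i ζ‖ ^ 2 : ℝ) : ℂ) := by
        have := Complex.mul_conj (s i ζ)
        rw [Complex.normSq_eq_norm_sq] at this
        push_cast at this ⊢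
        rw [← this, ha]; ring
      rw [e, Complex.add_re, Complex.re_ofReal_mul, h3, Complex.add_re, Complex.ofReal_re]
    rw [h0, Complex.zero_re] at h2
    have h4 : -(‖s i ζ‖ * M) ≤ (s i ζ * x i).re := by
      have h5 := (abs_le.1 (Complex.abs_re_le_norm (s i ζ * x i))).1
      rw [norm_mul] at h5
      have h6 : ‖s i ζ‖ * ‖x i‖ ≤ ‖s i ζ‖ * M := by
        gcongr; exact (norm_le_pi_norm x i).trans (hM x hx)
      linarith
    set n := ‖s i ζ‖
    -- `4 T * (T n² - n M) ≥ -M²`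
    have h7 : -M ^ 2 ≤ 4 * T * ((s i ζ * x i).re + T * n ^ 2) := by
      nlinarith [sq_nonneg (2 * T * n - M)]
    have h8 : 0 ≤ 1 - t := by linarith [ht.2]
    have h9 : 4 * T * ((pair s ζ x).re) ≤ M ^ 2 := by
      have : 4 * T * ((pair s ζ x).re) =
        (1 - t) * -(4 * T * ((s i ζ * x i).re + T * n ^ 2)) := by linear_combination (-4 * T) * h2
      rw [this]
      nlinarith [ht.1, sq_nonneg M]
    nlinarith [sq_nonneg M]
  set P : Set (ι → ℂ) := interior K with hP
  have hPo : IsOpen P := isOpen_interior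
  have hPK : P ⊆ K := interior_subset
  set F : (ι → ℂ) × ℝ → (ι → ℂ) → ℂ := fun q x =>
    f q.1 * ((x i - a q.1) * kern A B p s q.1 (contract i (a q.1) q.2 x)) with hF
  have hFc : ContinuousOn (fun q : ((ι → ℂ) × ℝ) × (ι → ℂ) => F q.1 q.2)
      ((S ×ˢ Icc 0 1) ×ˢ P) := by
    refine ContinuousOn.mul ?_ (ContinuousOn.mul (Continuous.continuousOn ?_) ?_)
    · exact (hf.continuousOn.mono hSU).comp (continuous_fst.comp continuous_fst).continuousOn
        fun q hq => hq.1.1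
    · have := hac.comp (continuous_fst.comp (continuous_fst (X := (ι → ℂ) × ℝ) (Y := ι → ℂ)))
      exact (by fun_prop : Continuous fun q : ((ι → ℂ) × ℝ) × (ι → ℂ) => q.2 i).sub this
    · refine (continuousOn_kern hA hB hp hs).comp
        (f := fun q : ((ι → ℂ) × ℝ) × (ι → ℂ) => (q.1.1, contract i (a q.1.1) q.1.2 q.2))
        (Continuous.continuousOn ?_) fun q hq => hne _ hq.1.1 _ (hPK hq.2) _ hq.1.2
      unfold contract
      fun_prop
  have hkd : ∀ ζ ∈ S, ∀ x ∈ K, ∀ t ∈ Icc (0 : ℝ) 1,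
      DifferentiableAt ℂ (kern A B p s ζ) (contract i (a ζ) t x) := by
    intro ζ hζ x hx t ht
    refine (differentiableOn_kern ζ).differentiableAt (IsOpen.mem_nhds ?_ (hne ζ hζ x hx t ht))
    exact isOpen_ne_fun (differentiable_pair s ζ).continuous continuous_const
  have hFd : ∀ q ∈ S ×ˢ Icc (0 : ℝ) 1, DifferentiableOn ℂ (F q) P := fun q hq x hx =>
    ((fderiv_contract_mul i (a q.1) q.2 x (hkd _ hq.1 x (hPK hx) _ hq.2)).1.const_mul
      _).differentiableWithinAt
  set μ : Measure ((ι → ℂ) × ℝ) := (volume.restrict S).prod (volume.restrict (Icc 0 1)) with hμ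
  have : IsFiniteMeasure (volume.restrict S) := ⟨by
    rw [Measure.restrict_apply_univ]; exact hS.measure_lt_top⟩
  have hSm : MeasurableSet (S ×ˢ Icc (0 : ℝ) 1) := hS.measurableSet.prod measurableSet_Icc
  have hμS : ∀ᵐ q ∂μ, q ∈ S ×ˢ Icc (0 : ℝ) 1 := by
    rw [hμ, Measure.prod_restrict]; exact ae_restrict_mem hSm
  have hSc : IsCompact (S ×ˢ Icc (0 : ℝ) 1) := hS.prod isCompact_Icc
  refine ⟨fun x => c⁻¹ * ∫ q, F q x ∂μ,
    (differentiableOn_integral_param hSc hSm hμS hPo hFc hFd).const_mul _, fun x hx => ?_⟩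
  obtain ⟨hint, hder⟩ := hasFDerivAt_integral_param hSc hSm hμS hPo hFc hFd hx
  rw [fderiv_const_mul hder.differentiableAt]
  change c⁻¹ * (fderiv ℂ (fun x => ∫ q, F q x ∂μ) x (Pi.single i 1)) = _
  rw [fderiv_integral_param hSc hSm hμS hPo hFc hFd hx, inv_mul_eq_iff_eq_mul₀ hc, ← hker x (hPK hx),
    hμ, integral_prod _ (hint.apply_continuousLinearMap _)]
  refine setIntegral_congr_fun hS.measurableSet fun ζ hζ => ?_
  have hFt : ∀ t ∈ Icc (0 : ℝ) 1, HasDerivAt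
      (fun t : ℝ => f ζ * ((t : ℂ) * kern A B p s ζ (contract i (a ζ) t x)))
      (fderiv ℂ (F (ζ, t)) x (Pi.single i 1)) t := by
    intro t ht
    have hk := hkd ζ hζ x (hPK hx) t ht
    have h1 := fderiv_contract_mul i (a ζ) t x hk
    have h2 : fderiv ℂ (F (ζ, t)) x (Pi.single i 1) = f ζ * (kern A B p s ζ (contract i (a ζ) t x) +
        (x i - a ζ) * (t * fderiv ℂ (kern A B p s ζ) (contract i (a ζ) t x) (Pi.single i 1))) := by
      rw [← h1.2]
      simp only [hF]
      rw [fderiv_const_mul h1.1]; rfl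
    rw [h2]
    exact (hasDerivAt_contract i (a ζ) t x hk).const_mul _
  have hcontt : ContinuousOn (fun t : ℝ => fderiv ℂ (F (ζ, t)) x (Pi.single i 1)) (Icc 0 1) := by
    have h1 := continuousOn_fderiv_param hPo hFc hFd hx
    have h2 : ContinuousOn (fun t : ℝ => fderiv ℂ (F (ζ, t)) x) (Icc 0 1) :=
      h1.comp (f := fun t : ℝ => (ζ, t)) (by fun_prop) fun t ht => ⟨hζ, ht⟩
    exact h2.clm_apply continuousOn_const
  change ∫ t in Icc (0 : ℝ) 1, fderiv ℂ (F (ζ, t)) x (Pi.single i 1) = f ζ * kern A B p s ζ x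
  rw [integral_Icc_eq_integral_Ioc, ← intervalIntegral.integral_of_le zero_le_one,
    intervalIntegral.integral_eq_sub_of_hasDerivAt (fun t ht => hFt t (by
      rwa [uIcc_of_le zero_le_one] at ht)) (ContinuousOn.intervalIntegrable (by
      rwa [uIcc_of_le zero_le_one]))]
  simp [contract]

end

/-! ### Antiderivatives on convex open sets -/

section

variable {ι : Type*} [Fintype ι] [DecidableEq ι]

/-- The projection that forgets the coordinates in `J`. -/
noncomputable def forget (J : Finset ι) : (ι → ℂ) →L[ℂ] ({l // l ∉ J} → ℂ) :=
  ContinuousLinearMap.pi fun l => ContinuousLinearMap.proj l.1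

/-- Extension by zero, a right inverse of `forget J`. -/
noncomputable def extend (J : Finset ι) : ({l // l ∉ J} → ℂ) →L[ℂ] (ι → ℂ) :=
  ContinuousLinearMap.pi fun l =>
    if h : l ∉ J then ContinuousLinearMap.proj (φ := fun _ : {l // l ∉ J} => ℂ) ⟨l, h⟩ else 0

omit [Fintype ι] in
theorem forget_extend (J : Finset ι) (y : {l // l ∉ J} → ℂ) : forget J (extend J y) = y := by
  ext l
  simp [forget, extend, l.2]

theorem isOpen_forget_image (J : Finset ι) {U : Set (ι → ℂ)} (hU : IsOpen U) :
    IsOpen (forget J '' U) :=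
  (forget J).isOpenMap (fun y => ⟨_, forget_extend J y⟩) _ hU

omit [Fintype ι] [DecidableEq ι] in
theorem convex_forget_image (J : Finset ι) {U : Set (ι → ℂ)} (hU : Convex ℝ U) :
    Convex ℝ (forget J '' U) :=
  hU.linear_image ((forget J).restrictScalars ℝ).toLinearMap

/-- A holomorphic function on a convex set whose derivatives in the directions of `J` vanish is a
function of the remaining coordinates. -/
theorem exists_descend (J : Finset ι) {U : Set (ι → ℂ)} (hU : IsOpen U) (hUc : Convex ℝ U)
    {b : (ι → ℂ) → ℂ} (hb : DifferentiableOn ℂ b U)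
    (h0 : ∀ i ∈ J, ∀ x ∈ U, fderiv ℂ b x (Pi.single i 1) = 0) :
    ∃ b' : ({l // l ∉ J} → ℂ) → ℂ, DifferentiableOn ℂ b' (forget J '' U) ∧
      ∀ x ∈ U, b' (forget J x) = b x := by
  have hker : ∀ x ∈ U, ∀ w, forget J w = 0 → fderiv ℂ b x w = 0 := by
    intro x hx w hw
    rw [pi_eq_sum_univ' w, map_sum]
    refine Finset.sum_eq_zero fun i _ => ?_
    by_cases hi : i ∈ J
    · rw [map_smul, h0 i hi x hx, smul_zero]
    · have : w i = 0 := congrFun hw ⟨i, hi⟩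
      simp [this]
  have hconst : ∀ x ∈ U, ∀ y ∈ U, forget J x = forget J y → b x = b y := by
    intro x hx y hy hxy
    have hmem : ∀ t ∈ Icc (0 : ℝ) 1, x + (t : ℂ) • (y - x) ∈ U := fun t ht => by
      have := hUc.add_smul_sub_mem hx hy ht
      rwa [← Complex.coe_smul] at this
    have hd : ∀ t ∈ Icc (0 : ℝ) 1, HasDerivAt (fun t : ℝ => b (x + (t : ℂ) • (y - x))) 0 t := by
      intro t ht
      have h1 := hasDerivAt_line (v := y - x)
        (hb.differentiableAt (hU.mem_nhds (hmem t ht)))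
      rw [hker _ (hmem t ht) _ (by rw [map_sub, hxy, sub_self])] at h1
      exact h1.comp_ofReal
    have := constant_of_has_deriv_right_zero (f := fun t : ℝ => b (x + (t : ℂ) • (y - x)))
      (a := 0) (b := 1) (fun t ht => (hd t ht).continuousAt.continuousWithinAt)
      (fun t ht => (hd t (Ico_subset_Icc_self ht)).hasDerivWithinAt) 1 (by simp)
    simpa using this.symm
  choose! c hc using fun y (hy : y ∈ forget J '' U) => hy
  have hbc : ∀ x ∈ U, b (c (forget J x)) = b x := fun x hx =>
    hconst _ (hc _ (mem_image_of_mem _ hx)).1 _ hx (hc _ (mem_image_of_mem _ hx)).2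
  refine ⟨fun y => b (c y), ?_, hbc⟩
  rintro _ ⟨x, hx, rfl⟩
  -- near `forget J x` the function is `b` composed with an affine section through `x`
  set σ : ({l // l ∉ J} → ℂ) → (ι → ℂ) := fun y => x + extend J (y - forget J x) with hσ
  have hσx : σ (forget J x) = x := by simp [hσ]
  have hσd : Differentiable ℂ σ := by simp only [hσ]; fun_prop
  have hfσ : ∀ y, forget J (σ y) = y := fun y => by simp [hσ, forget_extend, map_sub]
  have h1 : DifferentiableAt ℂ (fun y => b (σ y)) (forget J x) :=
    DifferentiableAt.comp (g := b) _ (by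
      rw [hσx]; exact hb.differentiableAt (hU.mem_nhds hx)) hσd.differentiableAt
  refine (h1.congr_of_eventuallyEq ?_).differentiableWithinAt
  have h2 : ∀ᶠ y in 𝓝 (forget J x), σ y ∈ U :=
    hσd.continuous.continuousAt.eventually_mem (by rw [hσx]; exact hU.mem_nhds hx)
  filter_upwards [h2] with y hy
  rw [← hbc _ hy, hfσ]

/-- The standard exhaustion of a convex open set by compact convex sets. -/
theorem exists_exhaustion {E : Type*} [NormedAddCommGroup E] [NormedSpace ℝ E] [ProperSpace E]
    {U : Set E} (hU : IsOpen U) (hUc : Convex ℝ U) :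
    ∃ K : ℕ → Set E, (∀ n, IsCompact (K n)) ∧ (∀ n, Convex ℝ (K n)) ∧ (∀ n, K n ⊆ U) ∧
      (∀ n, K n ⊆ interior (K (n + 1))) ∧ ∀ x ∈ U, ∃ n, x ∈ K n := by
  set K : ℕ → Set E := fun n => closedBall 0 n ∩ {x | ball x (1 / (n + 1)) ⊆ U} with hK
  refine ⟨K, fun n => (isCompact_closedBall _ _).inter_right ?_,
    fun n => (convex_closedBall _ _).inter ?_, fun n x hx => hx.2 (mem_ball_self (by positivity)),
    fun n x hx => ?_, fun x hx => ?_⟩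
  · have : {x : E | ball x (1 / (n + 1)) ⊆ U} = ⋂ z ∈ Uᶜ, {x | (1 : ℝ) / (n + 1) ≤ dist z x} := by
      ext x
      simp only [mem_ofPred_eq, mem_iInter, mem_compl_iff]
      refine ⟨fun h z hz => ?_, fun h z hz => ?_⟩
      · by_contra! h'
        exact hz (h h')
      · by_contra h'
        exact absurd (mem_ball.1 hz) (not_lt.2 (h z h'))
    rw [this]
    exact isClosed_biInter fun z _ => isClosed_le continuous_const (by fun_prop)
  · intro x hx y hy s t hs ht hst z hz
    have e : z = s • (x + (z - (s • x + t • y))) + t • (y + (z - (s • x + t • y))) := by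
      have : z = (s + t) • z := by rw [hst, one_smul]
      have h2 : s • (x + (z - (s • x + t • y))) + t • (y + (z - (s • x + t • y))) =
        (s • x + t • y) + ((s + t) • z - (s + t) • (s • x + t • y)) := by module
      rw [h2, hst]; simp
    rw [e]
    rw [mem_ball, dist_eq_norm] at hz
    exact hUc (hx (by simpa [dist_eq_norm] using hz)) (hy (by simpa [dist_eq_norm] using hz))
      hs ht hst
  · have hlt : (1 : ℝ) / (n + 1 + 1) < 1 / (n + 1) := by
      apply one_div_lt_one_div_of_lt <;> linarith [(n.cast_nonneg : (0 : ℝ) ≤ n)]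
    have h1 : (1 : ℝ) / (n + 1) ≤ 1 := by
      rw [div_le_one (by positivity)]; linarith [(n.cast_nonneg : (0 : ℝ) ≤ n)]
    have h2 : (0 : ℝ) < 1 / (n + 1 + 1) := by positivity
    rw [mem_interior_iff_mem_nhds]
    refine mem_of_superset (ball_mem_nhds x (sub_pos.2 hlt)) fun y hy => ⟨?_, ?_⟩
    · have h3 := hx.1
      rw [mem_closedBall] at h3 ⊢
      have := dist_triangle y x 0
      rw [mem_ball] at hy
      push_cast
      linarith
    · refine (ball_subset_ball' ?_).trans hx.2
      rw [mem_ball] at hy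
      push_cast
      linarith
  · obtain ⟨r, hr, hrU⟩ := Metric.isOpen_iff.1 hU x hx
    obtain ⟨n, hn⟩ := exists_nat_gt (max ‖x‖ (1 / r))
    have h1 := (le_max_left _ _).trans_lt hn
    have h2 := (le_max_right _ _).trans_lt hn
    refine ⟨n, by simpa using h1.le, (ball_subset_ball ?_).trans hrU⟩
    rw [div_lt_iff₀ hr] at h2
    rw [div_le_iff₀ (by positivity)]
    nlinarith

/-- On a convex open set every partial derivative is surjective on holomorphic functions. Successive
antiderivatives on an exhaustion differ by functions of the other coordinates, which are approximated
by entire ones, so that the corrected sequence converges (the Mittag-Leffler procedure). -/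
theorem antideriv_open (i : ι) {U : Set (ι → ℂ)} (hU : IsOpen U) (hUc : Convex ℝ U)
    {f : (ι → ℂ) → ℂ} (hf : DifferentiableOn ℂ f U) :
    ∃ θ : (ι → ℂ) → ℂ, DifferentiableOn ℂ θ U ∧
      ∀ x ∈ U, fderiv ℂ θ x (Pi.single i 1) = f x := by
  obtain ⟨K, hK, hKc, hKU, hKi, hKx⟩ := exists_exhaustion hU hUc
  have hmono : Monotone K := monotone_nat_of_le_succ fun n => (hKi n).trans interior_subset
  set V : ℕ → Set (ι → ℂ) := fun n => interior (K (n + 1)) with hV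
  have hVo : ∀ n, IsOpen (V n) := fun n => isOpen_interior
  have hVm : Monotone V := fun m n h => interior_mono (hmono (by omega))
  choose t ht htf using fun n => antideriv_compact i hU (hK (n + 1)) (hKc (n + 1)) (hKU (n + 1)) hf
  have htd : ∀ n, ∀ x ∈ V n, DifferentiableAt ℂ (t n) x := fun n x hx =>
    (ht n).differentiableAt ((hVo n).mem_nhds hx)
  have hdesc : ∀ n, ∃ h : ({l // l ∉ ({i} : Finset ι)} → ℂ) → ℂ,
      DifferentiableOn ℂ h (forget {i} '' V n) ∧
      ∀ x ∈ V n, h (forget {i} x) = t (n + 1) x - t n x := by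
    intro n
    refine exists_descend (b := fun x => t (n + 1) x - t n x) {i} (hVo n) (hKc _).interior
      (((ht (n + 1)).mono (hVm n.le_succ)).sub (ht n)) fun k hk x hx => ?_
    rw [Finset.mem_singleton.1 hk, fderiv_fun_sub (htd _ _ (hVm n.le_succ hx)) (htd _ _ hx)]
    rw [_root_.sub_apply, htf (n + 1) x (hVm n.le_succ hx), htf n x hx, sub_self]
  choose h hh hht using hdesc
  have happ : ∀ n : ℕ, ∃ g, Differentiable ℂ g ∧
      ∀ y ∈ forget {i} '' K n, ‖h n y - g y‖ ≤ (1 / 2) ^ n := fun n =>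
    runge (isOpen_forget_image {i} (hVo n)) ((hK n).image (forget {i}).continuous)
      (convex_forget_image {i} (hKc n)) (image_mono (hKi n)) (hh n) (by positivity)
  choose g hg hhg using happ
  set Θ : ℕ → (ι → ℂ) → ℂ := fun n x => t n x - ∑ m ∈ Finset.range n, g m (forget {i} x) with hΘ
  have hgl : ∀ m, Differentiable ℂ fun x : ι → ℂ => g m (forget {i} x) := fun m =>
    (hg m).comp (forget {i}).differentiable
  have hgi : ∀ m x, fderiv ℂ (fun x : ι → ℂ => g m (forget {i} x)) x (Pi.single i 1) = 0 := by
    intro m x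
    have h1 := (hg m (forget {i} x)).hasFDerivAt.comp x (forget {i}).hasFDerivAt
    have h2 : forget {i} (Pi.single i 1 : ι → ℂ) = 0 := by
      ext l
      have : l.1 ≠ i := by simpa using l.2
      simp [forget, this]
    have h3 := congrArg (fun φ => φ (Pi.single i 1 : ι → ℂ)) h1.fderiv
    simpa [h2, Function.comp_def] using h3
  have hsum : ∀ n, Differentiable ℂ fun x : ι → ℂ => ∑ m ∈ Finset.range n, g m (forget {i} x) :=
    fun n => Differentiable.fun_sum fun m _ => hgl m
  have hΘd : ∀ n, DifferentiableOn ℂ (Θ n) (V n) := fun n =>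
    (ht n).sub (hsum n).differentiableOn
  have hΘi : ∀ n, ∀ x ∈ V n, fderiv ℂ (Θ n) x (Pi.single i 1) = f x := by
    intro n x hx
    simp only [hΘ]
    rw [fderiv_fun_sub (htd n x hx) (hsum n x), fderiv_fun_sum fun m _ => hgl m x,
      _root_.sub_apply, _root_.sum_apply, Finset.sum_eq_zero fun m _ => hgi m x,
      htf n x hx, sub_zero]
  have hstep : ∀ n, ∀ x ∈ K n, ‖Θ (n + 1) x - Θ n x‖ ≤ 1 * (1 / 2) ^ n := by
    intro n x hx
    have : Θ (n + 1) x - Θ n x = h n (forget {i} x) - g n (forget {i} x) := by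
      simp only [hΘ, Finset.sum_range_succ]
      rw [hht n x (hKi n hx)]; ring
    rw [this, one_mul]
    exact hhg n _ (mem_image_of_mem _ hx)
  have hlim := fun N => exists_limit (V := V N) (f := Θ) (n₀ := N + 1) (C := 1) (hVo N)
    (fun n hn => (hΘd n).mono (hVm (by omega)))
    fun n hn x hx => hstep n x (hmono hn (interior_subset hx))
  choose G hGd hGl hGi using hlim
  set θ : (ι → ℂ) → ℂ := fun x => limUnder atTop fun n => Θ n x with hθ
  have hθG : ∀ N, ∀ x ∈ V N, θ =ᶠ[𝓝 x] G N := fun N x hx => by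
    filter_upwards [(hVo N).mem_nhds hx] with y hy using (hGl N y hy).limUnder_eq
  refine ⟨θ, fun x hx => ?_, fun x hx => ?_⟩ <;> obtain ⟨N, hN⟩ := hKx x hx
  · exact (((hGd N).differentiableAt ((hVo N).mem_nhds (hKi N hN))).congr_of_eventuallyEq
      (hθG N x (hKi N hN))).differentiableWithinAt
  · rw [(hθG N x (hKi N hN)).fderiv_eq]
    exact hGi N x (hKi N hN) _ _ fun n hn => hΘi n x (hVm (by omega) (hKi N hN))

/-- Simultaneous antiderivatives in the directions of `J`, for closed systems. The derivatives are
matched one direction at a time: the error in the next direction does not depend on the coordinates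
treated before, hence it is a derivative of a function of the remaining coordinates. -/
theorem antideriv_system {U : Set (ι → ℂ)} (hU : IsOpen U) (hUc : Convex ℝ U)
    {f : ι → (ι → ℂ) → ℂ} (J : Finset ι) (hf : ∀ i ∈ J, DifferentiableOn ℂ (f i) U)
    (hcl : ∀ i ∈ J, ∀ k ∈ J, ∀ x ∈ U,
      fderiv ℂ (f i) x (Pi.single k 1) = fderiv ℂ (f k) x (Pi.single i 1)) :
    ∃ θ : (ι → ℂ) → ℂ, DifferentiableOn ℂ θ U ∧
      ∀ i ∈ J, ∀ x ∈ U, fderiv ℂ θ x (Pi.single i 1) = f i x := by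
  induction J using Finset.induction_on with
  | empty => exact ⟨0, differentiableOn_const 0, by simp⟩
  | insert i J hi ih =>
    have hJ : ∀ k ∈ J, k ∈ insert i J := fun k hk => Finset.mem_insert_of_mem hk
    have hiJ : i ∈ insert i J := Finset.mem_insert_self i J
    obtain ⟨θ, hθ, hθf⟩ := ih (fun k hk => hf k (hJ k hk))
      fun k hk l hl => hcl k (hJ k hk) l (hJ l hl)
    have hθi := differentiableOn_fderiv_apply hU hθ (Pi.single i 1)
    obtain ⟨b, hb, hbx⟩ := exists_descend (b := fun x => f i x - fderiv ℂ θ x (Pi.single i 1)) J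
      hU hUc ((hf i hiJ).sub hθi) (by
        intro k hk x hx
        have e : (fun y => fderiv ℂ θ y (Pi.single k 1)) =ᶠ[𝓝 x] f k := by
          filter_upwards [hU.mem_nhds hx] with y hy using hθf k hk y hy
        rw [fderiv_fun_sub ((hf i hiJ).differentiableAt (hU.mem_nhds hx))
          (hθi.differentiableAt (hU.mem_nhds hx)), _root_.sub_apply,
          fderiv_fderiv_symm hU hθ hx, e.fderiv_eq, hcl i hiJ k (hJ k hk) x hx, sub_self])
    obtain ⟨ψ, hψ, hψb⟩ := antideriv_open (⟨i, hi⟩ : {l // l ∉ J}) (isOpen_forget_image J hU)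
      (convex_forget_image J hUc) hb
    have hder : ∀ x ∈ U, HasFDerivAt (fun x => θ x + ψ (forget J x))
        (fderiv ℂ θ x + (fderiv ℂ ψ (forget J x)).comp (forget J)) x := fun x hx =>
      (hθ.differentiableAt (hU.mem_nhds hx)).hasFDerivAt.fun_add
        ((hψ.differentiableAt ((isOpen_forget_image J hU).mem_nhds
          (mem_image_of_mem _ hx))).hasFDerivAt.comp x (forget J).hasFDerivAt)
    refine ⟨fun x => θ x + ψ (forget J x), fun x hx =>
      (hder x hx).differentiableAt.differentiableWithinAt, fun k hk x hx => ?_⟩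
    rw [(hder x hx).fderiv, _root_.add_apply, ContinuousLinearMap.comp_apply]
    rcases Finset.mem_insert.1 hk with rfl | hk
    · have : forget J (Pi.single k 1) = Pi.single ⟨k, hi⟩ 1 := by
        ext l
        simp [forget, Pi.single_apply, Subtype.ext_iff]
      rw [this, hψb _ (mem_image_of_mem _ hx), hbx x hx]; ring
    · have : forget J (Pi.single k 1) = 0 := by
        ext l
        have : l.1 ≠ k := fun h => l.2 (h ▸ hk)
        simp [forget, this]
      rw [this, map_zero, add_zero, hθf k hk x hx]

end

end RelPoincare

theorem stmt_13 {n : ℕ} (U : Set ((Fin n → ℂ) × (Fin n → ℂ))) (hne : U.Nonempty)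
    (hconv : Convex ℝ U) (hopen : IsOpen U)
    (a : Fin n → Fin n → ((Fin n → ℂ) × (Fin n → ℂ)) → ℂ)
    (hdiff : ∀ i j, DifferentiableOn ℂ (a i j) U)
    (hclosed : ∀ i j k, ∀ x ∈ U,
      fderiv ℂ (a i j) x (0, Pi.single k 1) = fderiv ℂ (a k j) x (0, Pi.single i 1)) :
    ∃ θ : Fin n → ((Fin n → ℂ) × (Fin n → ℂ)) → ℂ,
      (∀ j, DifferentiableOn ℂ (θ j) U) ∧
      ∀ i j, ∀ x ∈ U, fderiv ℂ (θ j) x (0, Pi.single i 1) = a i j x := by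
  -- both groups of variables become coordinates of one space; the directions are the `Sum.inr k`
  let e : ((Fin n → ℂ) × (Fin n → ℂ)) ≃L[ℂ] (Fin n ⊕ Fin n → ℂ) :=
    (LinearEquiv.sumArrowLequivProdArrow (Fin n) (Fin n) ℂ ℂ).symm.toContinuousLinearEquiv
  have he : ∀ k : Fin n, e (0, Pi.single k 1) = Pi.single (Sum.inr k) 1 := by
    intro k
    ext l
    rcases l with l | l
    · simp [e]
    · simp [e, Pi.single_apply]
  have hes : ∀ k : Fin n, e.symm (Pi.single (Sum.inr k) 1) = (0, Pi.single k 1) := fun k => by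
    rw [← he, e.symm_apply_apply]
  set W : Set (Fin n ⊕ Fin n → ℂ) := e.symm ⁻¹' U with hW
  have hWo : IsOpen W := hopen.preimage e.symm.continuous
  have hWc : Convex ℝ W :=
    hconv.linear_preimage (e.symm.toContinuousLinearMap.restrictScalars ℝ).toLinearMap
  have hder : ∀ i j, ∀ x ∈ W, HasFDerivAt (fun x => a i j (e.symm x))
      ((fderiv ℂ (a i j) (e.symm x)).comp e.symm.toContinuousLinearMap) x := fun i j x hx =>
    HasFDerivAt.comp x ((hdiff i j).differentiableAt (hopen.mem_nhds hx)).hasFDerivAt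
      e.symm.hasFDerivAt
  have hsys : ∀ j, ∃ θ : (Fin n ⊕ Fin n → ℂ) → ℂ, DifferentiableOn ℂ θ W ∧
      ∀ i : Fin n, ∀ x ∈ W, fderiv ℂ θ x (Pi.single (Sum.inr i) 1) = a i j (e.symm x) := by
    intro j
    obtain ⟨θ, hθ, hθf⟩ := RelPoincare.antideriv_system hWo hWc
      (f := Sum.elim (fun _ => 0) fun i x => a i j (e.symm x))
      (Finset.univ.map Function.Embedding.inr)
      (by
        simp only [Finset.mem_map, Finset.mem_univ, true_and, forall_exists_index]
        rintro _ i rfl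
        exact fun x hx => (hder i j x hx).differentiableAt.differentiableWithinAt)
      (by
        simp only [Finset.mem_map, Finset.mem_univ, true_and, forall_exists_index]
        rintro _ i rfl _ k rfl x hx
        simp only [Function.Embedding.inr_apply, Sum.elim_inr]
        rw [(hder i j x hx).fderiv, (hder k j x hx).fderiv]
        simpa [hes] using hclosed i j k _ hx)
    exact ⟨θ, hθ, fun i => hθf (Sum.inr i) (by simp)⟩
  choose θ hθ hθf using hsys
  have hcomp : ∀ j, ∀ x ∈ U, HasFDerivAt (fun x => θ j (e x))
      ((fderiv ℂ (θ j) (e x)).comp e.toContinuousLinearMap) x := fun j x hx =>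
    HasFDerivAt.comp x ((hθ j).differentiableAt (hWo.mem_nhds (by simpa [hW]))).hasFDerivAt
      e.hasFDerivAt
  refine ⟨fun j x => θ j (e x), fun j x hx =>
    (hcomp j x hx).differentiableAt.differentiableWithinAt, fun i j x hx => ?_⟩
  rw [(hcomp j x hx).fderiv]
  have := hθf j i (e x) (by simpa [hW])
  simpa [he] using this
end

section
/- Let U ⊆ (Fin n → ℂ) be a nonempty convex open set and f : U → ℂ a ℂ-analytic function. Then the fourth iterated Fréchet derivative of f vanishes identically on U (iteratedFDeriv ℂ 4 f = 0 on U) if and only if f agrees on U with a polynomial of total degree at most 3: there exists p ∈ MvPolynomial (Fin n) ℂ with totalDegree p ≤ 3 such that f(x) = eval x p for all x ∈ U. -/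
/-!
The mathematical content is that `f`, assumed only once complex differentiable, is smooth, so that
vanishing of its fourth derivative is a genuine condition and Taylor's formula applies.

Smoothness in several variables (`contDiffOn_natCast_of_differentiableOn`) is obtained by iterating
the fact that each directional derivative of a holomorphic function is holomorphic
(`differentiableOn_fderiv_apply_of_isOpen`), which follows from the one-variable Cauchy formula by
differentiation under the integral sign.

If the derivative of order `k + 1` vanishes, Taylor's formula with integral remainder along the
segment from a base point `a` to `x`, contained in `U` by convexity, has zero remainder. Each Taylor
term is a multilinear form evaluated on the diagonal at `x - a`, hence a polynomial in `x` of degree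
at most its order.

Conversely, differentiating a polynomial lowers its degree, so derivatives of order exceeding the
degree vanish; on the open set `U` the iterated derivatives of `f` are those of the polynomial.
-/

section Smoothness

open MeasureTheory Metric Set

/-- Directional derivatives of a holomorphic function are holomorphic. On a small ball,
`2πi ∂ᵥf(x) = ∮ z⁻² f(x + zv) dz` by Cauchy's formula, and the right-hand side may be differentiated
under the integral sign because the Schwarz lemma bounds `fderiv ℂ f` near `x₀`. -/
theorem differentiableOn_fderiv_apply_of_isOpen {E : Type*} [NormedAddCommGroup E] [NormedSpace ℂ E]
    [FiniteDimensional ℂ E] {U : Set E} (hU : IsOpen U) {f : E → ℂ}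
    (hf : DifferentiableOn ℂ f U) (v : E) :
    DifferentiableOn ℂ (fun x => fderiv ℂ f x v) U := by
  intro x₀ hx₀
  refine DifferentiableAt.differentiableWithinAt ?_
  borelize E
  have : ProperSpace E := FiniteDimensional.proper ℂ E
  obtain ⟨ρ, hρ, hball⟩ : ∃ ρ > 0, ball x₀ ρ ⊆ U ∩ {y | dist (f y) (f x₀) < 1} := by
    refine Metric.mem_nhds_iff.1 (Filter.inter_mem (hU.mem_nhds hx₀) ?_)
    exact (hf.continuousOn.continuousAt (hU.mem_nhds hx₀)) (ball_mem_nhds _ one_pos)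
  have hdiff : ∀ y ∈ ball x₀ ρ, DifferentiableAt ℂ f y := fun y hy =>
    hf.differentiableAt (hU.mem_nhds (hball hy).1)
  have hbound : ∀ y ∈ ball x₀ (ρ / 2), ‖fderiv ℂ f y‖ ≤ 2 / (ρ / 2) := by
    intro y hy
    have hsub : ball y (ρ / 2) ⊆ ball x₀ ρ := by
      refine ball_subset_ball' ?_
      have := mem_ball.1 hy
      linarith
    refine Complex.norm_fderiv_le_div_of_mapsTo_ball
      (fun z hz => (hdiff z (hsub hz)).differentiableWithinAt) (fun z hz => ?_) (by positivity)
    have h1 : dist (f z) (f x₀) < 1 := (hball (hsub hz)).2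
    have h2 : dist (f y) (f x₀) < 1 := (hball (hsub (mem_ball_self (by positivity)))).2
    rw [mem_closedBall]
    linarith [dist_triangle_right (f z) (f y) (f x₀)]
  -- The circles `x + z • v`, `‖z‖ = r`, must stay in the half ball where `hbound` holds.
  obtain ⟨r, hr, hrv⟩ : ∃ r : ℝ, 0 < r ∧ r * ‖v‖ < ρ / 4 := by
    refine ⟨ρ / 4 / (‖v‖ + 1), by positivity, ?_⟩
    rw [div_mul_eq_mul_div, div_lt_iff₀ (by positivity)]
    nlinarith [norm_nonneg v]
  have hmem : ∀ x ∈ ball x₀ (ρ / 4), ∀ z : ℂ, ‖z‖ ≤ r → x + z • v ∈ ball x₀ (ρ / 2) := by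
    intro x hx z hz
    rw [mem_ball, dist_eq_norm] at hx ⊢
    have h1 : ‖z • v‖ ≤ r * ‖v‖ := by rw [norm_smul]; gcongr
    have h2 : x + z • v - x₀ = (x - x₀) + z • v := by abel
    rw [h2]
    linarith [norm_add_le (x - x₀) (z • v)]
  have hsmall : ball x₀ (ρ / 2) ⊆ ball x₀ ρ := ball_subset_ball (by linarith)
  have hcauchy : ∀ x ∈ ball x₀ (ρ / 4), (∮ z in C(0, r), (1 / (z - 0) ^ 2) • f (x + z • v))
      = (2 * Real.pi * Complex.I : ℂ) • fderiv ℂ f x v := by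
    intro x hx
    have hd : DifferentiableOn ℂ (fun z : ℂ => f (x + z • v)) (closedBall 0 r) := by
      intro z hz
      refine DifferentiableAt.differentiableWithinAt ?_
      exact (hdiff _ (hsmall (hmem x hx z (by simpa using hz)))).comp z (by fun_prop)
    rw [hd.deriv_eq_smul_circleIntegral hr, DifferentiableAt.deriv_comp_add_smul]
    · simp
    · exact hdiff _ (hsmall (hmem x hx 0 (by simpa using hr.le)))
  -- The density of the contour integral once the circle is parametrized by its angle.
  set c : ℝ → ℂ := fun θ => deriv (circleMap 0 r) θ * (1 / (circleMap 0 r θ - 0) ^ 2) with hc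
  have hcc : Continuous c := by
    have h0 : ∀ θ, (circleMap 0 r θ - 0) ^ 2 ≠ 0 := fun θ => by
      simpa using hr.ne'
    simp only [hc, deriv_circleMap]
    fun_prop (disch := exact h0 _)
  have hcn : ∀ θ, ‖c θ‖ ≤ 1 / r := by
    intro θ
    simp only [hc, deriv_circleMap, norm_mul, norm_div, norm_pow, sub_zero, norm_circleMap_zero,
      abs_of_pos hr, Complex.norm_I, norm_one]
    apply le_of_eq
    field_simp
  have hcirc : Continuous fun θ => circleMap 0 r θ • v := by fun_prop
  have hcm : ∀ θ, ‖circleMap 0 r θ‖ ≤ r := fun θ => by simp [abs_of_pos hr]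
  have hcont : ∀ x ∈ ball x₀ (ρ / 4), Continuous fun θ => c θ • f (x + circleMap 0 r θ • v) := by
    intro x hx
    refine hcc.smul (continuous_iff_continuousAt.2 fun θ => ?_)
    exact ContinuousAt.comp (f := fun θ => x + circleMap 0 r θ • v)
      (hdiff _ (hsmall (hmem x hx _ (hcm θ)))).continuousAt (by fun_prop)
  have key := hasFDerivAt_integral_of_dominated_of_fderiv_le (𝕜 := ℂ)
    (μ := volume.restrict (Ioc 0 (2 * Real.pi))) (x₀ := x₀) (s := ball x₀ (ρ / 4))
    (F := fun x θ => c θ • f (x + circleMap 0 r θ • v))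
    (F' := fun x θ => c θ • fderiv ℂ f (x + circleMap 0 r θ • v))
    (bound := fun _ => 1 / r * (2 / (ρ / 2)))
    (ball_mem_nhds _ (by positivity))
    (by
      filter_upwards [ball_mem_nhds x₀ (show 0 < ρ / 4 by positivity)] with x hx
      exact (hcont x hx).aestronglyMeasurable)
    ((hcont x₀ (mem_ball_self (by positivity))).integrableOn_Ioc)
    (by
      refine hcc.aestronglyMeasurable.smul ?_
      -- `fderiv ℂ f` is measurable for an arbitrary `f`, so its continuity is not needed here.
      have hm : Measurable fun θ : ℝ => fderiv ℂ f (x₀ + circleMap 0 r θ • v) :=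
        (measurable_fderiv ℂ f).comp (by fun_prop : Continuous fun θ : ℝ =>
          x₀ + circleMap 0 r θ • v).measurable
      exact hm.aestronglyMeasurable)
    (by
      refine Filter.Eventually.of_forall fun θ x hx => ?_
      rw [norm_smul]
      exact mul_le_mul (hcn θ) (hbound _ (hmem x hx _ (hcm θ))) (norm_nonneg _) (by positivity))
    (integrable_const _)
    (by
      refine Filter.Eventually.of_forall fun θ x hx => ?_
      have h1 := (hdiff _ (hsmall (hmem x hx _ (hcm θ)))).hasFDerivAt
      exact ((hasFDerivAt_comp_add_right _).2 h1).const_smul (c θ))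
  have hev : (fun x => fderiv ℂ f x v) =ᶠ[nhds x₀] fun x => (2 * Real.pi * Complex.I : ℂ)⁻¹ •
      ∫ θ in Ioc 0 (2 * Real.pi), c θ • f (x + circleMap 0 r θ • v) := by
    filter_upwards [ball_mem_nhds x₀ (show 0 < ρ / 4 by positivity)] with x hx
    have h := hcauchy x hx
    rw [circleIntegral, intervalIntegral.integral_of_le Real.two_pi_pos.le] at h
    simp only [hc, ← smul_eq_mul] at h ⊢
    simp only [smul_eq_mul, mul_assoc] at h ⊢
    rw [h]
    have : (Real.pi : ℂ) ≠ 0 := by exact_mod_cast Real.pi_ne_zero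
    field_simp
  refine DifferentiableAt.congr_of_eventuallyEq ?_ hev
  exact key.differentiableAt.const_smul (2 * Real.pi * Complex.I : ℂ)⁻¹

/-- A holomorphic function of finitely many complex variables is `C^k` for every finite `k`. -/
theorem contDiffOn_natCast_of_differentiableOn {E : Type*} [NormedAddCommGroup E] [NormedSpace ℂ E]
    [FiniteDimensional ℂ E] {U : Set E} (hU : IsOpen U) (k : ℕ) {f : E → ℂ}
    (hf : DifferentiableOn ℂ f U) : ContDiffOn ℂ k f U := by
  induction k generalizing f with
  | zero => exact contDiffOn_zero.2 hf.continuousOn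
  | succ k ih =>
    push_cast
    refine contDiffOn_succ_of_fderiv_apply hf (by simp) fun v => ?_
    refine (ih (differentiableOn_fderiv_apply_of_isOpen hU hf v)).congr fun x hx => ?_
    rw [fderivWithin_of_isOpen hU hx]

end Smoothness

section Polynomials

open MvPolynomial

theorem totalDegree_pderiv_add_one_le {σ R : Type*} [CommSemiring R] (p : MvPolynomial σ R) (i : σ)
    {k : ℕ} (hp : p.totalDegree ≤ k + 1) : (pderiv i p).totalDegree ≤ k := by
  refine Finset.sup_le fun m hm => ?_
  have hm' : m + Finsupp.single i 1 ∈ p.support := by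
    rw [mem_support_iff, coeff_pderiv] at hm
    exact mem_support_iff.2 (left_ne_zero_of_mul hm)
  have h := (le_totalDegree hm').trans hp
  rw [Finsupp.sum_add_index' (by simp) (by simp)] at h
  simpa using h

theorem hasFDerivAt_eval {n : ℕ} (p : MvPolynomial (Fin n) ℂ) (x : Fin n → ℂ) :
    HasFDerivAt (fun y => eval y p)
      (∑ i, eval x (pderiv i p) • ContinuousLinearMap.proj (R := ℂ) (φ := fun _ : Fin n => ℂ) i)
      x := by
  induction p using MvPolynomial.induction_on with
  | C a =>
    simp only [eval_C]
    refine (hasFDerivAt_const a x).congr_fderiv ?_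
    ext v
    simp
  | add p q hp hq =>
    simp only [map_add]
    refine (hp.fun_add hq).congr_fderiv ?_
    ext v
    simp [add_mul, Finset.sum_add_distrib]
  | mul_X p j hp =>
    have hX : HasFDerivAt (fun y : Fin n → ℂ => y j)
        (ContinuousLinearMap.proj (R := ℂ) (φ := fun _ : Fin n => ℂ) j) x := hasFDerivAt_apply j x
    simp only [map_mul, eval_X]
    refine (hp.fun_mul hX).congr_fderiv ?_
    ext v
    simp [pderiv_X, Pi.single_apply, Finset.mul_sum, Finset.sum_add_distrib, add_mul, apply_ite,
      ite_mul, mul_assoc]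

/-- By induction on `k`, constants being the case `k = 0`: the derivative of `p` is a combination of
the coordinate forms whose coefficients `pderiv i p` have smaller degree. -/
theorem iteratedFDeriv_eval_eq_zero {n : ℕ} (k : ℕ) (p : MvPolynomial (Fin n) ℂ)
    (hp : p.totalDegree ≤ k) : iteratedFDeriv ℂ (k + 1) (fun y => eval y p) = 0 := by
  induction k generalizing p with
  | zero =>
    obtain ⟨a, rfl⟩ : ∃ a, p = C a := ⟨_, totalDegree_eq_zero_iff_eq_C.1 (Nat.le_zero.1 hp)⟩
    simp only [eval_C]
    exact iteratedFDeriv_const_of_ne (by simp) a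
  | succ k ih =>
    have hsm : ∀ q : MvPolynomial (Fin n) ℂ, ContDiff ℂ (k + 1 : ℕ) fun y => eval y q := fun q =>
      (AnalyticOnNhd.eval_mvPolynomial q).contDiff
    have hfd : fderiv ℂ (fun y => eval y p) = fun y => ∑ i,
        ((ContinuousLinearMap.id ℂ ℂ).smulRight
          (ContinuousLinearMap.proj (R := ℂ) (φ := fun _ : Fin n => ℂ) i) ∘
            fun y => eval y (pderiv i p)) y := by
      funext y
      simpa using (hasFDerivAt_eval p y).fderiv
    funext x
    ext m
    rw [iteratedFDeriv_succ_apply_right, hfd, iteratedFDeriv_fun_sum_apply fun i _ =>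
      (ContinuousLinearMap.contDiff _).contDiffAt.comp x (hsm _).contDiffAt]
    simp only [ContinuousLinearMap.iteratedFDeriv_comp_left _ (hsm _).contDiffAt le_rfl,
      ih _ (totalDegree_pderiv_add_one_le p _ hp)]
    simp

/-- Restricting a `k`-linear form to the diagonal gives a polynomial function of degree at most
`k`; translating by `a` does not change this. -/
theorem exists_mvPolynomial_multilinear {n k : ℕ}
    (M : ContinuousMultilinearMap ℂ (fun _ : Fin k => (Fin n → ℂ)) ℂ) (a : Fin n → ℂ) :
    ∃ p : MvPolynomial (Fin n) ℂ, p.totalDegree ≤ k ∧ ∀ x, M (fun _ => x - a) = eval x p := by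
  refine ⟨∑ r : Fin k → Fin n, (∏ j, (X (r j) - C (a (r j)))) * C (M fun j => Pi.single (r j) 1),
    ?_, fun x => ?_⟩
  · refine totalDegree_finsetSum_le fun r _ => ?_
    refine (totalDegree_mul _ _).trans ?_
    rw [totalDegree_C, add_zero]
    refine (totalDegree_finsetProd _ _).trans ?_
    refine (Finset.sum_le_card_nsmul _ _ 1 fun j _ => ?_).trans (by simp)
    exact (totalDegree_sub_C_le _ _).trans (totalDegree_X _).le
  · have hx : x - a = ∑ i, (x i - a i) • (Pi.single i 1 : Fin n → ℂ) := by
      conv_lhs => rw [pi_eq_sum_univ' (x - a)]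
      simp
    conv_lhs => rw [hx]
    rw [← ContinuousMultilinearMap.coe_coe, MultilinearMap.map_sum]
    simp [MultilinearMap.map_smul_univ, map_sum, map_prod]

/-- On a convex open set, a function whose derivative of order `k + 1` vanishes is a polynomial of
degree at most `k`, namely its Taylor polynomial at some point. -/
theorem exists_mvPolynomial_of_iteratedFDeriv_eq_zero {n k : ℕ} {U : Set (Fin n → ℂ)} (hne : U.Nonempty)
    (hconv : Convex ℝ U) (hopen : IsOpen U) {f : (Fin n → ℂ) → ℂ}
    (hf : ContDiffOn ℂ (k + 1 : ℕ) f U) (h0 : ∀ x ∈ U, iteratedFDeriv ℂ (k + 1) f x = 0) :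
    ∃ p : MvPolynomial (Fin n) ℂ, p.totalDegree ≤ k ∧ ∀ x ∈ U, f x = eval x p := by
  obtain ⟨a, ha⟩ := hne
  choose q hqd hq using fun j : ℕ => exists_mvPolynomial_multilinear (iteratedFDeriv ℂ j f a) a
  have hat : ∀ x ∈ U, ContDiffAt ℂ (k + 1 : ℕ) f x := fun x hx =>
    hf.contDiffAt (hopen.mem_nhds hx)
  refine ⟨∑ j ∈ Finset.range (k + 1), C ((j.factorial : ℂ)⁻¹) * q j, ?_, fun x hx => ?_⟩
  · refine totalDegree_finsetSum_le fun j hj => ?_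
    refine (totalDegree_mul _ _).trans ?_
    rw [totalDegree_C, zero_add]
    exact (hqd j).trans (Nat.lt_succ_iff.1 (Finset.mem_range.1 hj))
  · have hseg : ∀ t ∈ Set.Icc (0 : ℝ) 1, a + t • (x - a) ∈ U := fun t ht =>
      hconv.add_smul_sub_mem ha hx ht
    -- Taylor's formula is available over `ℝ`; up to the order of smoothness `k + 1`, the real iterated
    -- derivatives are the complex ones with scalars restricted.
    have hT := map_add_eq_sum_add_integral_iteratedFDeriv (f := f) (x := a) (y := x - a) (n := k)
      fun t ht => by exact_mod_cast (hat _ (hseg t ht)).restrict_scalars ℝ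
    have hint : ∫ t in (0 : ℝ)..1, (1 - t) ^ k •
        iteratedFDeriv ℝ (k + 1) f (a + t • (x - a)) (fun _ => x - a) = 0 := by
      rw [intervalIntegral.integral_congr (g := fun _ => 0), intervalIntegral.integral_zero]
      intro t ht
      rw [Set.uIcc_of_le zero_le_one] at ht
      have h := (hat _ (hseg t ht)).restrictScalars_iteratedFDeriv (𝕜 := ℝ)
      simp [← h, h0 _ (hseg t ht)]
    rw [hint, add_sub_cancel, smul_zero, add_zero] at hT
    rw [hT, map_sum]
    refine Finset.sum_congr rfl fun j hj => ?_
    have hj' : (j : WithTop ℕ∞) ≤ (k + 1 : ℕ) := by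
      exact_mod_cast (Finset.mem_range.1 hj).le
    have h := ((hat a ha).of_le hj').restrictScalars_iteratedFDeriv (𝕜 := ℝ)
    rw [← h, map_mul, eval_C, ← hq j x]
    simp

end Polynomials

/-- For a holomorphic function `f` on a nonempty convex open set
`U ⊆ (Fin n → ℂ)`, the fourth iterated Fréchet derivative of `f` vanishes on `U` if and only
if `f` agrees on `U` with a polynomial of total degree at most 3. -/
theorem stmt_18 {n : ℕ} (U : Set (Fin n → ℂ)) (hne : U.Nonempty)
    (hconv : Convex ℝ U) (hopen : IsOpen U)
    (f : (Fin n → ℂ) → ℂ) (hf : DifferentiableOn ℂ f U) :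
    (∀ x ∈ U, iteratedFDeriv ℂ 4 f x = 0) ↔
      ∃ p : MvPolynomial (Fin n) ℂ, p.totalDegree ≤ 3 ∧
        ∀ x ∈ U, f x = MvPolynomial.eval x p := by
  constructor
  · exact fun h => exists_mvPolynomial_of_iteratedFDeriv_eq_zero hne hconv hopen
      (contDiffOn_natCast_of_differentiableOn hopen _ hf) h
  · rintro ⟨p, hp, hfp⟩ x hx
    have hev : f =ᶠ[nhds x] fun y => MvPolynomial.eval y p := by
      filter_upwards [hopen.mem_nhds hx] with y hy using hfp y hy
    rw [(hev.iteratedFDeriv ℂ 4).eq_of_nhds, iteratedFDeriv_eval_eq_zero 3 p hp, Pi.zero_apply]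
end
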